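/- arXiv:1402.0156 — 2 statements merged into one kernel-verified Lean document; each statement's English description precedes it below -/
import Mathlib

section
/- There exist universal constants C > 0 and ε_0 > 0 such that for every finite reversible, irreducible, aperiodic Markov chain as above, every 0 < ε ≤ ε_0, and all sets A ⊆ S ⊆ G with S nonempty and π(A) ≤ ε·π(S), the harmonic measure from stationarity satisfies h_S(A) = ∑_{x∈A} h_S(x) ≤ C · ε · log(1/ε) / (1−λ). -/
open MeasureTheory Finset
open scoped ENNReal

namespace HM

variable {G : Type*} [Fintype G] [DecidableEq G]

/-- `P` is a stochastic (transition) matrix. -/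
def IsStochastic (P : Matrix G G ℝ) : Prop :=
  (∀ x y, 0 ≤ P x y) ∧ ∀ x, ∑ y, P x y = 1

/-- Irreducibility: every state reaches every other state. -/
def IsIrreducible (P : Matrix G G ℝ) : Prop :=
  ∀ x y : G, ∃ t : ℕ, 0 < (P ^ t) x y

/-- Aperiodicity: the gcd of return times is `1` at every state. -/
def IsAperiodic (P : Matrix G G ℝ) : Prop :=
  ∀ x : G, ∀ d : ℕ, (∀ t : ℕ, 0 < (P ^ t) x x → d ∣ t) → d = 1

/-- `P` is reversible with respect to the full-support probability vector `pi`. -/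
def IsReversible (P : Matrix G G ℝ) (pi : G → ℝ) : Prop :=
  (∀ x, 0 < pi x) ∧ (∑ x, pi x = 1) ∧ ∀ x y, pi x * P x y = pi y * P y x

variable [MeasurableSpace G]

/-- `μ x` is the law of the Markov chain with transition matrix `P` started at `x`:
all finite-dimensional (cylinder) probabilities are given by products of transition
probabilities. -/
def IsMarkovChain (P : Matrix G G ℝ) (μ : G → Measure (ℕ → G)) : Prop :=
  (∀ x, IsProbabilityMeasure (μ x)) ∧
  ∀ (x : G) (t : ℕ) (w : ℕ → G),
    μ x {ω | ∀ i ≤ t, ω i = w i} =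
      ENNReal.ofReal ((if w 0 = x then 1 else 0) * ∏ i ∈ Finset.range t, P (w i) (w (i + 1)))

/-- Hitting time `T_S = inf {t ≥ 0 : X_t ∈ S}`, with value `⊤` if `S` is never hit. -/
noncomputable def hit (S : Set G) (ω : ℕ → G) : ℕ∞ :=
  sInf ((↑) '' {n : ℕ | ω n ∈ S})

/-- Return time `T_S^+ = inf {t ≥ 1 : X_t ∈ S}`, with value `⊤` if `S` is never hit. -/
noncomputable def hitPlus (S : Set G) (ω : ℕ → G) : ℕ∞ :=
  sInf ((↑) '' {n : ℕ | 1 ≤ n ∧ ω n ∈ S})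

/-- The event `X_{T_S} = x` (in particular `T_S < ∞`). -/
def hitsAt (S : Set G) (x : G) : Set (ℕ → G) :=
  {ω | ∃ n : ℕ, hit S ω = (n : ℕ∞) ∧ ω n = x}

/-- Harmonic measure on `S` from `y`: `h_{y,S}(x) = Pr_y[X_{T_S} = x]`. -/
noncomputable def harm (μ : G → Measure (ℕ → G)) (S : Set G) (y x : G) : ℝ :=
  (μ y (hitsAt S x)).toReal

/-- Harmonic measure on `S` from the stationary distribution:
`h_S(x) = ∑_y π(y) h_{y,S}(x)`. -/
noncomputable def harmStat (pi : G → ℝ) (μ : G → Measure (ℕ → G)) (S : Set G) (x : G) : ℝ :=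
  ∑ y, pi y * harm μ S y x

/-- `π(S) = ∑_{x ∈ S} π(x)`. -/
noncomputable def piOf (pi : G → ℝ) (S : Set G) : ℝ :=
  ∑ x, S.indicator pi x

/-- `λ = max_{j > 1} |λ_j|`, via the variational characterization: the largest absolute
value of the quadratic form of `P` on the orthogonal complement of the constants in
`L²(π)`.  For a reversible chain this equals the largest absolute value of a
non-Perron eigenvalue of `P`. -/
noncomputable def lam (P : Matrix G G ℝ) (pi : G → ℝ) : ℝ :=
  sSup {r : ℝ | ∃ f : G → ℝ, ∑ x, pi x * f x = 0 ∧ ∑ x, pi x * f x ^ 2 = 1 ∧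
    r = |∑ x, pi x * (f x * ∑ y, P x y * f y)|}

/-- `π_min = min_x π(x)`. -/
noncomputable def pimin (pi : G → ℝ) : ℝ := ⨅ x, pi x

/-- `π_max = max_x π(x)`. -/
noncomputable def pimax (pi : G → ℝ) : ℝ := ⨆ x, pi x

/-- `u(P) = min_{x ≠ y} Pr_x[T_y < T_x^+]`. -/
noncomputable def uP (μ : G → Measure (ℕ → G)) : ℝ :=
  sInf {r : ℝ | ∃ x y : G, x ≠ y ∧
    r = (μ x {ω | hit {y} ω < hitPlus {x} ω}).toReal}

/-- `E_x[T_S^+]` (as an extended nonnegative real, then converted to `ℝ`). -/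
noncomputable def expHitPlus (μ : G → Measure (ℕ → G)) (S : Set G) (x : G) : ℝ :=
  (∫⁻ ω, (hitPlus S ω : ℝ≥0∞) ∂ μ x).toReal

/-- The number of distinct states visited strictly before the return time `T_S^+`,
i.e. `|{X_0, X_1, …, X_{T_S^+ − 1}}|`. -/
noncomputable def visited (S : Set G) (ω : ℕ → G) : ℕ :=
  Set.ncard {g : G | ∃ n : ℕ, (n : ℕ∞) < hitPlus S ω ∧ ω n = g}

/-!
The stationary chain enters `A` within the first `t` steps with probability at most `(t + 1) π(A)`,
and every other path that hits `S` in `A` has avoided `S` up to time `t`. A function vanishing on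
`S` satisfies `(E f)² ≤ (1 - π(S)) E f²` by Cauchy–Schwarz, so the Poincaré inequality with
constant `γ = 1 - λ` bounds the quadratic form of the chain killed on `S` by `1 - γ π(S)`. Hence
`Pr(T_S > 2k) ≤ (1 - γ π(S))^k`, which is at most `ε` once `k ≥ log (1 / ε) / (γ π(S))`. For
the smallest such `k` the first term is of order `π(A) log (1 / ε) / (γ π(S)) ≤ ε log (1 / ε) / γ`.
-/

open Matrix

section WeightedL2

open RCLike

variable {V : Type*} [Fintype V] {w : V → ℝ} {M : Matrix V V ℝ}

lemma wInner_eq_sum (w f g : V → ℝ) : ⟪f, g⟫_[ℝ, w] = ∑ x, w x * (f x * g x) := by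
  simp [wInner, mul_comm]

lemma wInner_comm (w f g : V → ℝ) : ⟪f, g⟫_[ℝ, w] = ⟪g, f⟫_[ℝ, w] := by
  simp only [wInner_eq_sum, mul_comm]

lemma wInner_self_nonneg (hw : 0 ≤ w) (f : V → ℝ) : 0 ≤ ⟪f, f⟫_[ℝ, w] := by
  rw [wInner_eq_sum]
  exact sum_nonneg fun x _ => mul_nonneg (hw x) (mul_self_nonneg _)

lemma wInner_self_eq_zero (hw : ∀ x, 0 < w x) {f : V → ℝ} : ⟪f, f⟫_[ℝ, w] = 0 ↔ f = 0 := by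
  simp [wInner_eq_sum, funext_iff, (hw _).ne',
    sum_eq_zero_iff_of_nonneg fun x _ => mul_nonneg (hw x).le (mul_self_nonneg _)]

lemma wInner_le_wInner_right (hw : 0 ≤ w) {f g₁ g₂ : V → ℝ} (hf : 0 ≤ f) (hg : g₁ ≤ g₂) :
    ⟪f, g₁⟫_[ℝ, w] ≤ ⟪f, g₂⟫_[ℝ, w] := by
  simp only [wInner_eq_sum]
  gcongr with x
  exacts [hw x, hf x, hg x]

lemma wInner_sq_le (hw : 0 ≤ w) (f g : V → ℝ) :
    ⟪f, g⟫_[ℝ, w] ^ 2 ≤ ⟪f, f⟫_[ℝ, w] * ⟪g, g⟫_[ℝ, w] := by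
  simp only [wInner_eq_sum]
  exact sum_sq_le_sum_mul_sum_of_sq_le_mul _
    (fun x _ => mul_nonneg (hw x) (mul_self_nonneg _))
    (fun x _ => mul_nonneg (hw x) (mul_self_nonneg _)) fun x _ => le_of_eq (by ring)

lemma wInner_indicator_comm (w : V → ℝ) (S : Set V) (f g : V → ℝ) :
    ⟪f, S.indicator g⟫_[ℝ, w] = ⟪S.indicator f, g⟫_[ℝ, w] := by
  simp only [wInner_eq_sum, ← Set.indicator_mul_left, ← Set.indicator_mul_right]

lemma wInner_mulVec_comm (hM : ∀ x y, w x * M x y = w y * M y x) (f g : V → ℝ) :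
    ⟪f, M *ᵥ g⟫_[ℝ, w] = ⟪M *ᵥ f, g⟫_[ℝ, w] := by
  simp only [wInner_eq_sum, mulVec, dotProduct, mul_sum, sum_mul]
  rw [sum_comm]
  refine sum_congr rfl fun x _ => sum_congr rfl fun y _ => ?_
  linear_combination (f y * g x) * hM y x

lemma wInner_pow_mulVec_comm [DecidableEq V] (hM : ∀ x y, w x * M x y = w y * M y x)
    (n : ℕ) (f g : V → ℝ) : ⟪f, M ^ n *ᵥ g⟫_[ℝ, w] = ⟪M ^ n *ᵥ f, g⟫_[ℝ, w] := by
  induction n generalizing f g with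
  | zero => simp
  | succ n ih =>
    rw [pow_succ, ← mulVec_mulVec, ih, wInner_mulVec_comm hM, mulVec_mulVec, ← pow_succ',
      pow_succ]

lemma mulVec_nonneg (hM : ∀ x y, 0 ≤ M x y) {f : V → ℝ} (hf : 0 ≤ f) : 0 ≤ M *ᵥ f :=
  fun x => sum_nonneg fun y _ => mul_nonneg (hM x y) (hf y)

-- Halving the exponent makes `⟨1, M ^ (2k + 1) 1⟩` the quadratic form of `M` at `M ^ k 1`, so an
-- upper bound on the form suffices; negative eigenvalues of `M` do no harm.
lemma wInner_one_pow_mulVec_one_le [DecidableEq V] (hw : 0 ≤ w)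
    (hM : ∀ x y, w x * M x y = w y * M y x) (hM0 : ∀ x y, 0 ≤ M x y) (hM1 : M *ᵥ 1 ≤ 1)
    {r : ℝ} (hr : 0 ≤ r) (hMr : ∀ f, ⟪f, M *ᵥ f⟫_[ℝ, w] ≤ r * ⟪f, f⟫_[ℝ, w]) (k : ℕ) :
    ⟪1, M ^ (2 * k) *ᵥ 1⟫_[ℝ, w] ≤ r ^ k * ∑ x, w x := by
  induction k with
  | zero => simp [wInner_eq_sum]
  | succ k ih =>
    have split_pow (i j : ℕ) :
        ⟪1, M ^ (i + j) *ᵥ 1⟫_[ℝ, w] = ⟪M ^ i *ᵥ 1, M ^ j *ᵥ 1⟫_[ℝ, w] := by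
      rw [pow_add, ← mulVec_mulVec, wInner_pow_mulVec_comm hM]
    have decreasing : M ^ (2 * k + 1) *ᵥ M *ᵥ 1 ≤ M ^ (2 * k + 1) *ᵥ 1 := by
      rw [← sub_nonneg, ← mulVec_sub]
      exact mulVec_nonneg (pow_apply_nonneg hM0 _) (sub_nonneg.2 hM1)
    calc ⟪1, M ^ (2 * (k + 1)) *ᵥ 1⟫_[ℝ, w]
        = ⟪1, M ^ (2 * k + 1) *ᵥ M *ᵥ 1⟫_[ℝ, w] := by
          rw [mulVec_mulVec, ← pow_succ, mul_add_one]
      _ ≤ ⟪1, M ^ (2 * k + 1) *ᵥ 1⟫_[ℝ, w] := wInner_le_wInner_right hw zero_le_one decreasing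
      _ = ⟪M ^ k *ᵥ 1, M *ᵥ M ^ k *ᵥ 1⟫_[ℝ, w] := by
          rw [mulVec_mulVec, ← pow_succ', ← split_pow, ← add_assoc, two_mul]
      _ ≤ r * ⟪M ^ k *ᵥ 1, M ^ k *ᵥ 1⟫_[ℝ, w] := hMr _
      _ = r * ⟪1, M ^ (2 * k) *ᵥ 1⟫_[ℝ, w] := by rw [← split_pow, two_mul]
      _ ≤ r * (r ^ k * ∑ x, w x) := mul_le_mul_of_nonneg_left ih hr
      _ = r ^ (k + 1) * ∑ x, w x := by ring

end WeightedL2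

section SpectralGap

open RCLike

variable {V : Type*} [Fintype V] {P : Matrix V V ℝ} {pi f : V → ℝ} {c : ℝ}

lemma IsStochastic.mulVec_one (hP : IsStochastic P) : P *ᵥ 1 = 1 := by
  ext x
  simpa [mulVec, dotProduct] using hP.2 x

lemma IsReversible.nonneg (hR : IsReversible P pi) : 0 ≤ pi :=
  fun x => (hR.1 x).le

lemma wInner_one_mulVec (hP : IsStochastic P) (hR : IsReversible P pi) (f : V → ℝ) :
    ⟪1, P *ᵥ f⟫_[ℝ, pi] = ⟪1, f⟫_[ℝ, pi] := by
  rw [wInner_mulVec_comm hR.2.2, hP.mulVec_one]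

lemma IsReversible.vecMul_pow [DecidableEq V] (hR : IsReversible P pi) (hP : IsStochastic P)
    (n : ℕ) :
    pi ᵥ* P ^ n = pi := by
  have stationary : pi ᵥ* P = pi := by
    ext y
    simp only [vecMul, dotProduct, hR.2.2 _ y, ← mul_sum, hP.2, mul_one]
  induction n with
  | zero => simp
  | succ n ih => rw [pow_succ, ← vecMul_vecMul, ih, stationary]

lemma sum_sum_mul_sub_mul_sq (hP : IsStochastic P) (hR : IsReversible P pi) (f : V → ℝ)
    (c : ℝ) : ∑ x, ∑ y, pi x * P x y * (f x - c * f y) ^ 2 =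
      (1 + c ^ 2) * ⟪f, f⟫_[ℝ, pi] - 2 * c * ⟪f, P *ᵥ f⟫_[ℝ, pi] := by
  have fst_sq : ⟪f, f⟫_[ℝ, pi] = ∑ x, ∑ y, pi x * P x y * f x ^ 2 := by
    rw [wInner_eq_sum]
    refine sum_congr rfl fun x _ => ?_
    rw [← sum_mul, ← mul_sum, hP.2, mul_one, sq]
  have snd_sq : ⟪f, f⟫_[ℝ, pi] = ∑ x, ∑ y, pi x * P x y * f y ^ 2 := by
    rw [fst_sq, sum_comm]
    simp only [hR.2.2]
  have cross : ⟪f, P *ᵥ f⟫_[ℝ, pi] = ∑ x, ∑ y, pi x * P x y * (f x * f y) := by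
    simp only [wInner_eq_sum, mulVec, dotProduct, mul_sum]
    exact sum_congr rfl fun x _ => sum_congr rfl fun y _ => by ring
  rw [one_add_mul, cross]
  nth_rewrite 1 [fst_sq]
  rw [snd_sq]
  simp only [mul_sum, ← sum_add_distrib, ← sum_sub_distrib]
  exact sum_congr rfl fun x _ => sum_congr rfl fun y _ => by ring

lemma abs_wInner_mulVec_self_le (hP : IsStochastic P) (hR : IsReversible P pi) (f : V → ℝ) :
    |⟪f, P *ᵥ f⟫_[ℝ, pi]| ≤ ⟪f, f⟫_[ℝ, pi] := by
  have form_nonneg (c : ℝ) :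
      0 ≤ (1 + c ^ 2) * ⟪f, f⟫_[ℝ, pi] - 2 * c * ⟪f, P *ᵥ f⟫_[ℝ, pi] := by
    rw [← sum_sum_mul_sub_mul_sq hP hR]
    exact sum_nonneg fun x _ => sum_nonneg fun y _ =>
      mul_nonneg (mul_nonneg (hR.nonneg x) (hP.1 x y)) (sq_nonneg _)
  rw [abs_le]
  constructor <;> linarith [form_nonneg 1, form_nonneg (-1)]

lemma eq_mul_of_mul_wInner_mulVec_self_eq (hP : IsStochastic P) (hR : IsReversible P pi)
    (hc : c ^ 2 = 1) (hf : c * ⟪f, P *ᵥ f⟫_[ℝ, pi] = ⟪f, f⟫_[ℝ, pi]) {x y : V}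
    (hxy : 0 < P x y) : f x = c * f y := by
  have term_nonneg (x y : V) : 0 ≤ pi x * P x y * (f x - c * f y) ^ 2 :=
    mul_nonneg (mul_nonneg (hR.nonneg x) (hP.1 x y)) (sq_nonneg _)
  have sum_eq_zero : ∑ x, ∑ y, pi x * P x y * (f x - c * f y) ^ 2 = 0 := by
    rw [sum_sum_mul_sub_mul_sq hP hR, hc]
    linarith
  have row_eq_zero := (sum_eq_zero_iff_of_nonneg fun x _ => sum_nonneg fun y _ =>
    term_nonneg x y).1 sum_eq_zero x (mem_univ x)
  have term_eq_zero := (sum_eq_zero_iff_of_nonneg fun y _ => term_nonneg x y).1 row_eq_zero y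
    (mem_univ y)
  simpa [(mul_pos (hR.1 x) hxy).ne', sub_eq_zero] using term_eq_zero

lemma eq_pow_mul_of_pow_apply_pos [DecidableEq V] (hP : ∀ x y, 0 ≤ P x y)
    (hf : ∀ x y, 0 < P x y → f x = c * f y) (t : ℕ) {x y : V} (hxy : 0 < (P ^ t) x y) :
    f x = c ^ t * f y := by
  induction t generalizing y with
  | zero =>
    obtain rfl : x = y := by
      by_contra hne
      simp [hne] at hxy
    simp
  | succ t ih =>
    rw [pow_succ, mul_apply] at hxy
    obtain ⟨z, -, hz⟩ := exists_lt_of_sum_lt (s := univ) (f := fun _ : V => (0 : ℝ))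
      (by simpa using hxy)
    have hxz : 0 < (P ^ t) x z := pos_of_mul_pos_left hz (hP z y)
    have hzy : 0 < P z y := pos_of_mul_pos_right hz (pow_apply_nonneg hP t x z)
    rw [ih hxz, hf z y hzy, pow_succ, mul_assoc]

lemma IsIrreducible.eq_of_forall_pos [DecidableEq V] (hI : IsIrreducible P)
    (hP : ∀ x y, 0 ≤ P x y) (hf : ∀ x y, 0 < P x y → f x = f y) (x y : V) : f x = f y := by
  obtain ⟨t, ht⟩ := hI x y
  simpa using eq_pow_mul_of_pow_apply_pos (c := 1) hP (by simpa using hf) t ht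

lemma IsAperiodic.eq_zero_of_forall_pos [DecidableEq V] (hA : IsAperiodic P)
    (hP : ∀ x y, 0 ≤ P x y) (hf : ∀ x y, 0 < P x y → f x = -f y) : f = 0 := by
  by_contra hne
  obtain ⟨x, hx⟩ := Function.ne_iff.1 hne
  have even_return (t : ℕ) (ht : 0 < (P ^ t) x x) : 2 ∣ t := by
    have hfx := eq_pow_mul_of_pow_apply_pos (c := -1) hP (by simpa using hf) t ht
    rcases Nat.even_or_odd t with even | odd
    · exact even.two_dvd
    · rw [odd.neg_one_pow, neg_one_mul, self_eq_neg] at hfx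
      exact absurd hfx hx
  exact absurd (hA x 2 even_return) (by norm_num)

lemma eq_zero_of_abs_wInner_mulVec_self_eq [DecidableEq V] (hP : IsStochastic P)
    (hI : IsIrreducible P) (hA : IsAperiodic P) (hR : IsReversible P pi)
    (hf0 : ⟪1, f⟫_[ℝ, pi] = 0) (hf : |⟪f, P *ᵥ f⟫_[ℝ, pi]| = ⟪f, f⟫_[ℝ, pi]) : f = 0 := by
  rcases eq_or_eq_neg_of_abs_eq hf with pos | neg
  · have edge (x y : V) (hxy : 0 < P x y) : f x = f y := by
      simpa using eq_mul_of_mul_wInner_mulVec_self_eq hP hR (one_pow 2)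
        (by rw [pos, one_mul]) hxy
    ext x
    have const (y : V) : f y = f x := hI.eq_of_forall_pos hP.1 edge y x
    simpa [wInner_eq_sum, const, ← sum_mul, hR.2.1] using hf0
  · refine hA.eq_zero_of_forall_pos hP.1 fun x y hxy => ?_
    simpa using eq_mul_of_mul_wInner_mulVec_self_eq hP hR neg_one_sq
      (by rw [neg, neg_one_mul, neg_neg]) hxy

/-- The unit sphere of the orthogonal complement of the constants in `L²(π)`, over which `lam`
maximises the quadratic form of the chain. -/
def meanZeroSphere (pi : V → ℝ) : Set (V → ℝ) :=
  {f | ⟪1, f⟫_[ℝ, pi] = 0 ∧ ⟪f, f⟫_[ℝ, pi] = 1}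

lemma isCompact_meanZeroSphere (hpi : ∀ x, 0 < pi x) : IsCompact (meanZeroSphere pi) := by
  have closed : IsClosed (meanZeroSphere pi) := by
    simp only [meanZeroSphere, wInner_eq_sum]
    exact (isClosed_eq (by fun_prop) continuous_const).inter
      (isClosed_eq (by fun_prop) continuous_const)
  refine (isCompact_univ_pi fun x => isCompact_Icc (a := -√(1 / pi x))
    (b := √(1 / pi x))).of_isClosed_subset closed fun f hf x _ => ?_
  have le_one : pi x * (f x * f x) ≤ 1 := by
    rw [← hf.2, wInner_eq_sum]
    exact single_le_sum (f := fun x => pi x * (f x * f x))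
      (fun y _ => mul_nonneg (hpi y).le (mul_self_nonneg _)) (mem_univ x)
  exact abs_le.1 (Real.abs_le_sqrt ((le_div_iff₀' (hpi x)).2 (by rwa [sq])))

lemma lam_eq_sSup_image (P : Matrix V V ℝ) (pi : V → ℝ) :
    lam P pi = sSup ((fun f => |⟪f, P *ᵥ f⟫_[ℝ, pi]|) '' meanZeroSphere pi) := by
  simp only [lam, Set.image, meanZeroSphere, wInner_eq_sum, mulVec, dotProduct, Pi.one_apply,
    one_mul, sq, Set.mem_ofPred_eq, and_assoc, eq_comm]

lemma lam_nonneg (P : Matrix V V ℝ) (pi : V → ℝ) : 0 ≤ lam P pi := by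
  apply Real.sSup_nonneg
  rintro r ⟨f, -, -, rfl⟩
  exact abs_nonneg _

lemma lam_lt_one [DecidableEq V] (hP : IsStochastic P) (hI : IsIrreducible P)
    (hA : IsAperiodic P) (hR : IsReversible P pi) : lam P pi < 1 := by
  rw [lam_eq_sSup_image]
  rcases (meanZeroSphere pi).eq_empty_or_nonempty with empty | nonempty
  · simp [empty]
  obtain ⟨f, ⟨mean_zero, unit⟩, hf⟩ := (isCompact_meanZeroSphere hR.1).exists_sSup_image_eq
    nonempty (f := fun f => |⟪f, P *ᵥ f⟫_[ℝ, pi]|) (by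
      simp only [wInner_eq_sum, mulVec, dotProduct]
      fun_prop)
  rw [hf]
  refine lt_of_le_of_ne (unit ▸ abs_wInner_mulVec_self_le hP hR f) fun heq => ?_
  simp [eq_zero_of_abs_wInner_mulVec_self_eq hP hI hA hR mean_zero (heq.trans unit.symm)]
    at unit

lemma wInner_mulVec_self_le_lam_mul (hP : IsStochastic P) (hR : IsReversible P pi)
    (hf : ⟪1, f⟫_[ℝ, pi] = 0) : ⟪f, P *ᵥ f⟫_[ℝ, pi] ≤ lam P pi * ⟪f, f⟫_[ℝ, pi] := by
  rcases (wInner_self_nonneg hR.nonneg f).eq_or_lt' with zero | pos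
  · simp [(wInner_self_eq_zero hR.1).1 zero]
  set a := (√⟪f, f⟫_[ℝ, pi])⁻¹
  have ha : a * a = ⟪f, f⟫_[ℝ, pi]⁻¹ := by
    rw [← mul_inv, Real.mul_self_sqrt pos.le]
  have unit : a • f ∈ meanZeroSphere pi := by
    simp [meanZeroSphere, wInner_smul_left, wInner_smul_right, hf, ← mul_assoc, ha, pos.ne']
  have bdd : BddAbove ((fun f => |⟪f, P *ᵥ f⟫_[ℝ, pi]|) '' meanZeroSphere pi) := by
    refine ⟨1, ?_⟩
    rintro _ ⟨g, hg, rfl⟩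
    exact hg.2 ▸ abs_wInner_mulVec_self_le hP hR g
  have normalized := (le_abs_self _).trans (le_csSup bdd ⟨a • f, unit, rfl⟩)
  simp only [mulVec_smul, wInner_smul_left, wInner_smul_right, star_trivial, smul_eq_mul,
    ← mul_assoc, ha] at normalized
  rwa [inv_mul_le_iff₀ pos, mul_comm, ← lam_eq_sSup_image] at normalized

/-- The Poincaré inequality `γ · Var_π(f) ≤ 𝓔(f, f)`, where `𝓔(f, f) = ⟨f, (I - P) f⟩_π` is the
Dirichlet form. It says that `γ` is at most the spectral gap `1 - λ₂`. -/
def PoincareInequality (P : Matrix V V ℝ) (pi : V → ℝ) (γ : ℝ) : Prop :=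
  ∀ f : V → ℝ, γ * (⟪f, f⟫_[ℝ, pi] - ⟪1, f⟫_[ℝ, pi] ^ 2) ≤ ⟪f, f - P *ᵥ f⟫_[ℝ, pi]

lemma poincareInequality_one_sub_lam (hP : IsStochastic P) (hR : IsReversible P pi) :
    PoincareInequality P pi (1 - lam P pi) := by
  intro f
  set m := ⟪1, f⟫_[ℝ, pi]
  set g := f - m • (1 : V → ℝ)
  have one_one : ⟪(1 : V → ℝ), 1⟫_[ℝ, pi] = 1 := by simp [wInner_eq_sum, hR.2.1]
  have g_mean : ⟪1, g⟫_[ℝ, pi] = 0 := by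
    simp [g, wInner_sub_right, wInner_smul_right, one_one, m]
  have g_sq : ⟪g, g⟫_[ℝ, pi] = ⟪f, f⟫_[ℝ, pi] - m ^ 2 := by
    simp only [g, wInner_sub_left, wInner_sub_right, wInner_smul_left, wInner_smul_right, one_one,
      wInner_comm pi f 1, star_trivial, smul_eq_mul]
    ring
  have g_form : ⟪g, g - P *ᵥ g⟫_[ℝ, pi] = ⟪f, f - P *ᵥ f⟫_[ℝ, pi] := by
    have : g - P *ᵥ g = f - P *ᵥ f := by
      simp [g, mulVec_sub, mulVec_smul, hP.mulVec_one]
    rw [this]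
    simp [g, wInner_sub_left, wInner_sub_right, wInner_smul_left, wInner_one_mulVec hP hR]
  rw [← g_sq, ← g_form, wInner_sub_right pi g g, one_sub_mul]
  exact sub_le_sub_left (wInner_mulVec_self_le_lam_mul hP hR g_mean) _

end SpectralGap

section KilledChain

open RCLike

variable {V : Type*} {P : Matrix V V ℝ} {pi : V → ℝ} {γ : ℝ}

/-- The transition matrix of the chain killed on entering `S`. Both the rows and the columns of
`S` are set to zero, which keeps the matrix reversible. -/
noncomputable def killed (P : Matrix V V ℝ) (S : Set V) : Matrix V V ℝ :=
  of (Sᶜ.indicator fun x => Sᶜ.indicator (P x))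

lemma killed_empty (P : Matrix V V ℝ) : killed P ∅ = P := by
  ext x y
  simp [killed]

lemma killed_nonneg (hP : ∀ x y, 0 ≤ P x y) (S : Set V) (x y : V) : 0 ≤ killed P S x y := by
  by_cases hx : x ∈ S <;> by_cases hy : y ∈ S <;> simp [killed, hx, hy, hP]

lemma mul_killed_comm (hR : ∀ x y, pi x * P x y = pi y * P y x) (S : Set V) (x y : V) :
    pi x * killed P S x y = pi y * killed P S y x := by
  by_cases hx : x ∈ S <;> by_cases hy : y ∈ S <;> simp [killed, hx, hy, hR x y]

variable [Fintype V]

lemma killed_mulVec (P : Matrix V V ℝ) (S : Set V) (f : V → ℝ) :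
    killed P S *ᵥ f = Sᶜ.indicator (P *ᵥ Sᶜ.indicator f) := by
  ext x
  by_cases hx : x ∈ S
  · simp [killed, mulVec, dotProduct, hx]
  · simp only [killed, mulVec, dotProduct, of_apply, Set.mem_compl_iff, hx, not_false_eq_true,
      Set.indicator_of_mem, ← Set.indicator_mul_left, ← Set.indicator_mul_right]

lemma killed_mulVec_one_le (hP : IsStochastic P) (S : Set V) : killed P S *ᵥ 1 ≤ 1 := by
  have row_le : P *ᵥ Sᶜ.indicator 1 ≤ 1 := by
    conv_rhs => rw [← hP.mulVec_one]
    rw [← sub_nonneg, ← mulVec_sub]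
    exact mulVec_nonneg hP.1 <| sub_nonneg.2 <| Set.indicator_le_self' fun _ _ => zero_le_one
  rw [killed_mulVec]
  exact Set.indicator_le' (fun x _ => row_le x) fun _ _ => zero_le_one

lemma piOf_nonneg (hpi : 0 ≤ pi) (S : Set V) : 0 ≤ piOf pi S :=
  sum_nonneg fun x _ => Set.indicator_nonneg (fun y _ => hpi y) x

lemma piOf_pos (hpi : ∀ x, 0 < pi x) {S : Set V} (hS : S.Nonempty) : 0 < piOf pi S := by
  obtain ⟨x, hx⟩ := hS
  refine sum_pos' (fun y _ => Set.indicator_nonneg (fun y _ => (hpi y).le) y) ⟨x, mem_univ x, ?_⟩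
  simpa [hx] using hpi x

lemma IsReversible.piOf_compl (hR : IsReversible P pi) (S : Set V) :
    piOf pi Sᶜ = 1 - piOf pi S := by
  simp only [← hR.2.1, piOf, ← sum_sub_distrib, Set.indicator_compl, Pi.sub_apply]

lemma IsReversible.piOf_le_one (hR : IsReversible P pi) (S : Set V) : piOf pi S ≤ 1 := by
  linarith [hR.piOf_compl S, piOf_nonneg hR.nonneg Sᶜ]

lemma IsReversible.one_sub_mul_piOf_nonneg (hR : IsReversible P pi) (hγ1 : γ ≤ 1) (S : Set V) :
    0 ≤ 1 - γ * piOf pi S :=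
  sub_nonneg.2 (mul_le_one₀ hγ1 (piOf_nonneg hR.nonneg S) (hR.piOf_le_one S))

lemma wInner_one_indicator_one (pi : V → ℝ) (S : Set V) :
    ⟪(1 : V → ℝ), S.indicator 1⟫_[ℝ, pi] = piOf pi S := by
  simp only [wInner_eq_sum, piOf, Pi.one_apply, one_mul, ← Set.indicator_mul_right, mul_one]

lemma wInner_indicator_self_le (hpi : 0 ≤ pi) (S : Set V) (f : V → ℝ) :
    ⟪S.indicator f, S.indicator f⟫_[ℝ, pi] ≤ ⟪f, f⟫_[ℝ, pi] := by
  simp only [wInner_eq_sum]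
  gcongr ∑ x, ?_ with x
  by_cases hx : x ∈ S
  · simp [hx]
  · simpa [hx] using mul_nonneg (hpi x) (mul_self_nonneg (f x))

lemma sq_wInner_one_indicator_le (hpi : 0 ≤ pi) (S : Set V) (f : V → ℝ) :
    ⟪1, S.indicator f⟫_[ℝ, pi] ^ 2 ≤
      piOf pi S * ⟪S.indicator f, S.indicator f⟫_[ℝ, pi] := by
  have cauchy_schwarz := wInner_sq_le hpi (S.indicator 1) (S.indicator f)
  rwa [← wInner_indicator_comm, Set.indicator_indicator, Set.inter_self, ← wInner_indicator_comm,
    Set.indicator_indicator, Set.inter_self, wInner_one_indicator_one] at cauchy_schwarz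

lemma PoincareInequality.wInner_killed_mulVec_self_le (hγ : PoincareInequality P pi γ)
    (hγ0 : 0 ≤ γ) (hγ1 : γ ≤ 1) (hR : IsReversible P pi) (S : Set V) (f : V → ℝ) :
    ⟪f, killed P S *ᵥ f⟫_[ℝ, pi] ≤ (1 - γ * piOf pi S) * ⟪f, f⟫_[ℝ, pi] := by
  set g := Sᶜ.indicator f
  have sq_mean_le : ⟪1, g⟫_[ℝ, pi] ^ 2 ≤ (1 - piOf pi S) * ⟪g, g⟫_[ℝ, pi] :=
    hR.piOf_compl S ▸ sq_wInner_one_indicator_le hR.nonneg Sᶜ f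
  have poincare := hγ g
  rw [wInner_sub_right] at poincare
  calc ⟪f, killed P S *ᵥ f⟫_[ℝ, pi]
      = ⟪g, P *ᵥ g⟫_[ℝ, pi] := by rw [killed_mulVec, wInner_indicator_comm]
    _ ≤ (1 - γ * piOf pi S) * ⟪g, g⟫_[ℝ, pi] := by
        linarith [mul_le_mul_of_nonneg_left sq_mean_le hγ0]
    _ ≤ (1 - γ * piOf pi S) * ⟪f, f⟫_[ℝ, pi] :=
        mul_le_mul_of_nonneg_left (wInner_indicator_self_le hR.nonneg Sᶜ f)
          (hR.one_sub_mul_piOf_nonneg hγ1 S)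

lemma PoincareInequality.wInner_one_killed_pow_le [DecidableEq V]
    (hγ : PoincareInequality P pi γ) (hγ0 : 0 ≤ γ) (hγ1 : γ ≤ 1) (hP : IsStochastic P)
    (hR : IsReversible P pi) (S : Set V) (k : ℕ) :
    ⟪1, killed P S ^ (2 * k) *ᵥ 1⟫_[ℝ, pi] ≤ (1 - γ * piOf pi S) ^ k := by
  simpa only [hR.2.1, mul_one] using wInner_one_pow_mulVec_one_le hR.nonneg
    (mul_killed_comm hR.2.2 S) (killed_nonneg hP.1 S) (killed_mulVec_one_le hP S)
    (hR.one_sub_mul_piOf_nonneg hγ1 S) (hγ.wInner_killed_mulVec_self_le hγ0 hγ1 hR S) k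

end KilledChain

section PathSpace

open Function

variable {V : Type*}

lemma cylinder_update_succ (w : ℕ → V) (n : ℕ) (x : V) :
    PiNat.cylinder (update w n x) (n + 1) = PiNat.cylinder w n ∩ {ω | ω n = x} := by
  ext ω
  simp +contextual only [PiNat.cylinder, Nat.forall_lt_succ_right, update_self, Set.mem_inter_iff,
    Set.mem_ofPred_eq, Nat.ne_of_lt, update_of_ne, ne_eq, not_false_eq_true]

lemma inter_cylinder_of_dependsOn {F : Set (ℕ → V)} {n : ℕ}
    (hF : DependsOn (· ∈ F) (Set.Iio n)) (w : ℕ → V) [Decidable (w ∈ F)] :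
    F ∩ PiNat.cylinder w n = if w ∈ F then PiNat.cylinder w n else ∅ := by
  have mem_iff {ω : ℕ → V} (hω : ω ∈ PiNat.cylinder w n) : ω ∈ F ↔ w ∈ F := (hF hω).to_iff
  split_ifs with hw
  · exact Set.inter_eq_right.2 fun ω hω => (mem_iff hω).2 hw
  · exact Set.eq_empty_of_forall_notMem fun ω hω => hw ((mem_iff hω.2).1 hω.1)

lemma hit_eq_natCast_iff {S : Set V} {ω : ℕ → V} {n : ℕ} :
    hit S ω = n ↔ ω n ∈ S ∧ ∀ i < n, ω i ∉ S := by
  constructor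
  · intro h
    have nonempty : ((↑) '' {n : ℕ | ω n ∈ S} : Set ℕ∞).Nonempty := by
      rw [Set.nonempty_iff_ne_empty]
      intro empty
      exact ENat.natCast_ne_top n (by rw [← h, hit, empty, sInf_empty])
    obtain ⟨m, hm, hmn⟩ := csInf_mem nonempty
    obtain rfl : m = n := Nat.cast_injective (hmn.trans h)
    refine ⟨hm, fun i hi hiS => hi.not_ge ?_⟩
    exact Nat.cast_le.1 (h.symm.trans_le (sInf_le (Set.mem_image_of_mem _ hiS)))
  · rintro ⟨hn, before⟩
    refine le_antisymm (sInf_le ⟨n, hn, rfl⟩) (le_sInf ?_)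
    rintro _ ⟨m, hm, rfl⟩
    exact Nat.cast_le.2 (not_lt.1 fun hlt => before m hlt hm)

lemma pairwise_disjoint_hitsAt (S : Set V) : Pairwise (Disjoint on (hitsAt S)) := by
  rintro x y hxy
  refine Set.disjoint_left.2 ?_
  rintro ω ⟨n, hn, rfl⟩ ⟨m, hm, rfl⟩
  exact hxy (congrArg ω (Nat.cast_injective (hn.symm.trans hm)))

/-- The event `T_S > t` that the path has not visited `S` up to time `t`. -/
def avoids (S : Set V) (t : ℕ) : Set (ℕ → V) :=
  {ω | ∀ i ≤ t, ω i ∉ S}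

lemma dependsOn_mem_avoids (S : Set V) (t : ℕ) : DependsOn (· ∈ avoids S t) (Set.Iic t) :=
  fun _ _ h => propext <| forall₂_congr fun i hi => h i hi ▸ Iff.rfl

lemma avoids_inter_of_mem {S : Set V} {x : V} (hx : x ∈ S) (t : ℕ) :
    avoids S t ∩ {ω | ω t = x} = ∅ :=
  Set.eq_empty_of_forall_notMem fun _ hω => hω.1 t le_rfl (hω.2 ▸ hx)

lemma avoids_succ_inter_of_notMem {S : Set V} {x : V} (hx : x ∉ S) (t : ℕ) :
    avoids S (t + 1) ∩ {ω | ω (t + 1) = x} = avoids S t ∩ {ω | ω (t + 1) = x} := by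
  ext ω
  simp +contextual [avoids, Nat.le_succ_iff, or_imp, forall_and, hx]

lemma hitsAt_subset (S : Set V) (x : V) (t : ℕ) :
    hitsAt S x ⊆ (⋃ n ∈ range (t + 1), {ω | ω n = x}) ∪ (hitsAt S x ∩ avoids S t) := by
  intro ω hω
  obtain ⟨n, hn, hx⟩ := id hω
  rcases le_or_gt n t with early | late
  · exact Or.inl (Set.mem_biUnion (by simpa [Nat.lt_succ_iff] using early) hx)
  · exact Or.inr ⟨hω, fun i hi => (hit_eq_natCast_iff.1 hn).2 i (hi.trans_lt late)⟩

end PathSpace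

section PathMeasure

variable {V : Type*} [MeasurableSpace V] [MeasurableSingletonClass V]

lemma measurableSet_setOf_apply_mem [Finite V] (n : ℕ) (T : Set V) :
    MeasurableSet {ω : ℕ → V | ω n ∈ T} :=
  T.toFinite.measurableSet.preimage (measurable_pi_apply n)

lemma measurableSet_hitsAt [Finite V] (S : Set V) (x : V) : MeasurableSet (hitsAt S x) := by
  simp only [hitsAt, hit_eq_natCast_iff, Set.ofPred_exists, Set.ofPred_and, Set.ofPred_forall]
  exact .iUnion fun n => ((measurableSet_setOf_apply_mem n S).inter <| .iInter fun i =>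
    .iInter fun _ => measurableSet_setOf_apply_mem i Sᶜ).inter (measurableSet_setOf_apply_mem n {x})

lemma sum_measureReal_hitsAt_inter_le [Fintype V] (ν : Measure (ℕ → V)) [IsFiniteMeasure ν]
    (S : Set V) (E : Set (ℕ → V)) : ∑ x, ν.real (hitsAt S x ∩ E) ≤ ν.real E := by
  simpa [measureReal_restrict_apply (measurableSet_hitsAt S _)] using
    sum_measureReal_le_measureReal_univ (μ := ν.restrict E) (s := univ)
      (fun x _ => measurableSet_hitsAt S x) ((pairwise_disjoint_hitsAt S).set_pairwise _)

lemma sum_measureReal_inter_apply_eq [Fintype V] (ν : Measure (ℕ → V)) [IsFiniteMeasure ν]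
    (n : ℕ) (F : Set (ℕ → V)) : ∑ x, ν.real (F ∩ {ω | ω n = x}) = ν.real F := by
  have meas (x : V) : MeasurableSet {ω : ℕ → V | ω n = x} := measurableSet_setOf_apply_mem n {x}
  have fibres := sum_measureReal_preimage_singleton (μ := ν.restrict F) univ
    (f := fun ω : ℕ → V => ω n) fun x _ => meas x
  simpa [Set.preimage, measureReal_restrict_apply (meas _), Set.inter_comm F] using fibres

lemma measureReal_eq_mul_of_forall_cylinder [Finite V] [Nonempty V] {ν : Measure (ℕ → V)}
    [IsFiniteMeasure ν] {E F : Set (ℕ → V)} {c : ℝ} (n : ℕ)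
    (h : ∀ w, ν.real (E ∩ PiNat.cylinder w n) = ν.real (F ∩ PiNat.cylinder w n) * c) :
    ν.real E = ν.real F * c := by
  have := Fintype.ofFinite V
  induction n with
  | zero => simpa using h (Classical.arbitrary _)
  | succ n ih =>
    refine ih fun w => ?_
    rw [← sum_measureReal_inter_apply_eq ν n, ← sum_measureReal_inter_apply_eq ν n (F ∩ _), sum_mul]
    refine sum_congr rfl fun x _ => ?_
    simpa only [cylinder_update_succ, Set.inter_assoc] using h (Function.update w n x)

end PathMeasure

section MarkovProperty

open RCLike Function

variable {V : Type*} [DecidableEq V] [MeasurableSpace V] {P : Matrix V V ℝ} {pi : V → ℝ}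
  {μ : V → Measure (ℕ → V)}

lemma IsMarkovChain.measureReal_cylinder (hM : IsMarkovChain P μ) (hP : ∀ x y, 0 ≤ P x y) (y : V)
    (w : ℕ → V) (t : ℕ) : (μ y).real (PiNat.cylinder w (t + 1)) =
      (if w 0 = y then 1 else 0) * ∏ i ∈ range t, P (w i) (w (i + 1)) := by
  have nonneg : 0 ≤ (if w 0 = y then (1 : ℝ) else 0) * ∏ i ∈ range t, P (w i) (w (i + 1)) :=
    mul_nonneg (by split_ifs <;> simp) (prod_nonneg fun i _ => hP _ _)
  simp only [measureReal_def, PiNat.cylinder, Order.lt_add_one_iff, hM.2,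
    ENNReal.toReal_ofReal nonneg]

lemma IsMarkovChain.measureReal_cylinder_update (hM : IsMarkovChain P μ)
    (hP : ∀ x y, 0 ≤ P x y) (y : V) (w : ℕ → V) (t : ℕ) (x : V) :
    (μ y).real (PiNat.cylinder (update w (t + 1) x) (t + 2)) =
      (μ y).real (PiNat.cylinder w (t + 1)) * P (w t) x := by
  have same_edges : ∏ i ∈ range t, P (update w (t + 1) x i) (update w (t + 1) x (i + 1)) =
      ∏ i ∈ range t, P (w i) (w (i + 1)) :=
    prod_congr rfl fun i hi => by
      have : i < t := mem_range.1 hi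
      rw [update_of_ne (by lia), update_of_ne (by lia)]
  rw [hM.measureReal_cylinder hP, hM.measureReal_cylinder hP, prod_range_succ, same_edges,
    update_self, update_of_ne t.succ_ne_zero.symm, update_of_ne t.lt_succ_self.ne, mul_assoc]

variable [MeasurableSingletonClass V]

lemma IsMarkovChain.measureReal_inter_apply_succ_eq [Finite V] (hM : IsMarkovChain P μ)
    (hP : ∀ x y, 0 ≤ P x y) (y : V) {t : ℕ} {F : Set (ℕ → V)}
    (hF : DependsOn (· ∈ F) (Set.Iic t)) {z : V} (hz : ∀ ω ∈ F, ω t = z) (x : V) :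
    (μ y).real (F ∩ {ω | ω (t + 1) = x}) = (μ y).real F * P z x := by
  classical
  have := hM.1 y
  have : Nonempty V := ⟨y⟩
  have hF_lt : DependsOn (· ∈ F) (Set.Iio (t + 1)) := by
    rwa [← Order.succ_eq_add_one, Order.Iio_succ]
  refine measureReal_eq_mul_of_forall_cylinder (t + 1) fun w => ?_
  rw [Set.inter_right_comm, inter_cylinder_of_dependsOn hF_lt]
  split_ifs with hw
  · rw [← cylinder_update_succ, hM.measureReal_cylinder_update hP, hz w hw]
  · simp

variable [Fintype V]

lemma IsMarkovChain.measureReal_avoids_inter_apply_eq (hM : IsMarkovChain P μ)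
    (hP : ∀ x y, 0 ≤ P x y) (S : Set V) (t : ℕ) (y x : V) :
    (μ y).real (avoids S t ∩ {ω | ω t = x}) = Sᶜ.indicator ((killed P S ^ t) y) x := by
  have := hM.1 y
  induction t generalizing x with
  | zero =>
    by_cases hx : x ∈ S
    · simp [avoids_inter_of_mem hx, hx]
    have start : avoids S 0 ∩ {ω | ω 0 = x} = PiNat.cylinder (fun _ => x) 1 := by
      ext ω
      simp +contextual [avoids, PiNat.cylinder, hx]
    simp [start, hM.measureReal_cylinder hP, hx, one_apply, eq_comm (a := x)]
  | succ t ih =>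
    by_cases hx : x ∈ S
    · simp [avoids_inter_of_mem hx, hx]
    have step (z : V) : (μ y).real (avoids S t ∩ {ω | ω (t + 1) = x} ∩ {ω | ω t = z}) =
        (killed P S ^ t) y z * killed P S z x := by
      have depends : DependsOn (· ∈ avoids S t ∩ {ω | ω t = z}) (Set.Iic t) := fun ω ω' h =>
        congrArg₂ And (dependsOn_mem_avoids S t h) (congrArg (· = z) (h t Set.self_mem_Iic))
      rw [Set.inter_right_comm, hM.measureReal_inter_apply_succ_eq hP y depends fun _ hω => hω.2,
        ih]
      by_cases hz : z ∈ S <;> simp [killed, hx, hz]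
    rw [avoids_succ_inter_of_notMem hx, ← sum_measureReal_inter_apply_eq _ t, pow_succ]
    simp [step, mul_apply, hx]

lemma IsMarkovChain.measureReal_apply_eq (hM : IsMarkovChain P μ) (hP : ∀ x y, 0 ≤ P x y)
    (t : ℕ) (y x : V) : (μ y).real {ω | ω t = x} = (P ^ t) y x := by
  simpa [avoids, killed_empty] using hM.measureReal_avoids_inter_apply_eq hP ∅ t y x

lemma IsMarkovChain.sum_mul_measureReal_avoids_le (hM : IsMarkovChain P μ)
    (hP : ∀ x y, 0 ≤ P x y) (hpi : 0 ≤ pi) (S : Set V) (t : ℕ) :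
    ∑ y, pi y * (μ y).real (avoids S t) ≤ ⟪1, killed P S ^ t *ᵥ 1⟫_[ℝ, pi] := by
  simp only [wInner_eq_sum, Pi.one_apply, one_mul, mulVec, dotProduct, mul_one]
  gcongr with y
  · exact hpi y
  have := hM.1 y
  rw [← sum_measureReal_inter_apply_eq _ t]
  gcongr with x
  rw [hM.measureReal_avoids_inter_apply_eq hP]
  exact Set.indicator_le_self' (fun _ _ => pow_apply_nonneg (killed_nonneg hP S) _ _ _) x

end MarkovProperty

section HarmonicMeasure

variable {V : Type*} [Fintype V] [DecidableEq V] [MeasurableSpace V] [MeasurableSingletonClass V]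
  {P : Matrix V V ℝ} {pi : V → ℝ} {μ : V → Measure (ℕ → V)} {γ ε : ℝ}

lemma IsMarkovChain.harm_le (hM : IsMarkovChain P μ) (hP : ∀ x y, 0 ≤ P x y) (S : Set V)
    (t : ℕ) (y x : V) : harm μ S y x ≤
      ∑ n ∈ range (t + 1), (P ^ n) y x + (μ y).real (hitsAt S x ∩ avoids S t) := by
  have := hM.1 y
  calc harm μ S y x
      ≤ (μ y).real ((⋃ n ∈ range (t + 1), {ω | ω n = x}) ∪ (hitsAt S x ∩ avoids S t)) :=
        measureReal_mono (hitsAt_subset S x t)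
    _ ≤ (μ y).real (⋃ n ∈ range (t + 1), {ω | ω n = x}) +
          (μ y).real (hitsAt S x ∩ avoids S t) := measureReal_union_le _ _
    _ ≤ ∑ n ∈ range (t + 1), (μ y).real {ω | ω n = x} +
          (μ y).real (hitsAt S x ∩ avoids S t) := by
        gcongr
        exact measureReal_biUnion_finset_le _ _
    _ = _ := by simp only [hM.measureReal_apply_eq hP]

lemma IsMarkovChain.harmStat_le (hM : IsMarkovChain P μ) (hP : IsStochastic P)
    (hR : IsReversible P pi) (S : Set V) (t : ℕ) (x : V) : harmStat pi μ S x ≤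
      (t + 1) * pi x + ∑ y, pi y * (μ y).real (hitsAt S x ∩ avoids S t) := by
  have visits (n : ℕ) : ∑ y, pi y * (P ^ n) y x = pi x := congrFun (hR.vecMul_pow hP n) x
  calc harmStat pi μ S x
      ≤ ∑ y, pi y * (∑ n ∈ range (t + 1), (P ^ n) y x + (μ y).real (hitsAt S x ∩ avoids S t)) :=
        sum_le_sum fun y _ => mul_le_mul_of_nonneg_left (hM.harm_le hP.1 S t y x) (hR.nonneg y)
    _ = ∑ n ∈ range (t + 1), ∑ y, pi y * (P ^ n) y x +
          ∑ y, pi y * (μ y).real (hitsAt S x ∩ avoids S t) := by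
        simp only [mul_add, sum_add_distrib, mul_sum]
        rw [sum_comm]
    _ = _ := by simp [visits]

lemma IsMarkovChain.sum_indicator_harmStat_le (hM : IsMarkovChain P μ) (hP : IsStochastic P)
    (hR : IsReversible P pi) (A S : Set V) (t : ℕ) : ∑ x, A.indicator (harmStat pi μ S) x ≤
      (t + 1) * piOf pi A + ∑ y, pi y * (μ y).real (avoids S t) := by
  set late : V → V → ℝ := fun y x => (μ y).real (hitsAt S x ∩ avoids S t)
  have pointwise (x : V) : A.indicator (harmStat pi μ S) x ≤
      (t + 1) * A.indicator pi x + ∑ y, pi y * late y x := by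
    have late_nonneg : 0 ≤ ∑ y, pi y * late y x :=
      sum_nonneg fun y _ => mul_nonneg (hR.nonneg y) measureReal_nonneg
    by_cases hx : x ∈ A
    · simpa [hx] using hM.harmStat_le hP hR S t x
    · simpa [hx] using late_nonneg
  calc ∑ x, A.indicator (harmStat pi μ S) x
      ≤ ∑ x, ((t + 1) * A.indicator pi x + ∑ y, pi y * late y x) :=
        sum_le_sum fun x _ => pointwise x
    _ = (t + 1) * piOf pi A + ∑ y, pi y * ∑ x, late y x := by
        rw [sum_add_distrib, piOf, sum_comm]
        simp only [mul_sum]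
    _ ≤ (t + 1) * piOf pi A + ∑ y, pi y * (μ y).real (avoids S t) := by
        gcongr with y
        · exact hR.nonneg y
        have := hM.1 y
        exact sum_measureReal_hitsAt_inter_le (μ y) S _

lemma one_sub_pow_le_of_log_le {a ε : ℝ} (ha : a ≤ 1) (hε : 0 < ε) {k : ℕ}
    (hk : Real.log (1 / ε) ≤ k * a) : (1 - a) ^ k ≤ ε := by
  calc (1 - a) ^ k ≤ Real.exp (-a) ^ k :=
        pow_le_pow_left₀ (sub_nonneg.2 ha) (Real.one_sub_le_exp_neg a) k
    _ = Real.exp (-(k * a)) := by rw [← Real.exp_nat_mul, mul_neg]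
    _ ≤ Real.exp (-Real.log (1 / ε)) := Real.exp_le_exp.2 (neg_le_neg hk)
    _ = ε := by rw [one_div, Real.log_inv, neg_neg, Real.exp_log hε]

lemma exists_mul_add_one_sub_pow_le {s : ℝ} (hs0 : 0 < s) (hs1 : s ≤ 1) (hγ0 : 0 < γ)
    (hγ1 : γ ≤ 1) (hε0 : 0 < ε) (hε1 : ε ≤ Real.exp (-1)) :
    ∃ k : ℕ, (2 * k + 1) * (ε * s) + (1 - γ * s) ^ k ≤ 6 * ε * Real.log (1 / ε) / γ := by
  set L := Real.log (1 / ε)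
  have one_le_L : 1 ≤ L := by
    rw [Real.le_log_iff_exp_le (by positivity), le_one_div (Real.exp_pos 1) hε0]
    rwa [one_div, ← Real.exp_neg]
  have one_le : 1 ≤ L / γ := (one_le_div hγ0).2 (hγ1.trans one_le_L)
  set k := ⌈L / (γ * s)⌉₊
  have decay : (1 - γ * s) ^ k ≤ ε :=
    one_sub_pow_le_of_log_le (mul_le_one₀ hγ1 hs0.le hs1) hε0
      ((div_le_iff₀ (mul_pos hγ0 hs0)).1 (Nat.le_ceil _))
  have mul_le : k * s ≤ L / γ + s := by
    calc k * s ≤ (L / (γ * s) + 1) * s := by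
          gcongr
          exact (Nat.ceil_lt_add_one (by positivity)).le
      _ = L / γ + s := by field_simp
  refine ⟨k, ?_⟩
  calc (2 * k + 1) * (ε * s) + (1 - γ * s) ^ k
      ≤ ε * (2 * (k * s) + s + 1) := by linarith
    _ ≤ ε * (6 * (L / γ)) := by gcongr; linarith
    _ = 6 * ε * L / γ := by ring

theorem stmt11_general (hP : IsStochastic P) (hR : IsReversible P pi) (hM : IsMarkovChain P μ)
    (hγ : PoincareInequality P pi γ) (hγ0 : 0 < γ) (hγ1 : γ ≤ 1) (hε0 : 0 < ε)
    (hε1 : ε ≤ Real.exp (-1)) {A S : Set V} (hS : S.Nonempty) (hA : piOf pi A ≤ ε * piOf pi S) :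
    ∑ x, A.indicator (harmStat pi μ S) x ≤ 6 * ε * Real.log (1 / ε) / γ := by
  obtain ⟨k, hk⟩ := exists_mul_add_one_sub_pow_le (piOf_pos hR.1 hS) (hR.piOf_le_one S) hγ0 hγ1
    hε0 hε1
  have survival : ∑ y, pi y * (μ y).real (avoids S (2 * k)) ≤ (1 - γ * piOf pi S) ^ k :=
    (hM.sum_mul_measureReal_avoids_le hP.1 hR.nonneg S (2 * k)).trans
      (hγ.wInner_one_killed_pow_le hγ0.le hγ1 hP hR S k)
  calc ∑ x, A.indicator (harmStat pi μ S) x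
      ≤ ((2 * k : ℕ) + 1) * piOf pi A + ∑ y, pi y * (μ y).real (avoids S (2 * k)) :=
        hM.sum_indicator_harmStat_le hP hR A S (2 * k)
    _ ≤ (2 * k + 1) * (ε * piOf pi S) + (1 - γ * piOf pi S) ^ k := by
        push_cast
        gcongr
    _ ≤ 6 * ε * Real.log (1 / ε) / γ := hk

end HarmonicMeasure

/-- There are universal constants `C > 0` and `ε₀ > 0` such that for every finite
reversible, irreducible, aperiodic chain, every `0 < ε ≤ ε₀` and all
`A ⊆ S ⊆ G` with `S` nonempty and `π(A) ≤ ε·π(S)`,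
`h_S(A) ≤ C·ε·log(1/ε)/(1−λ)`. -/
theorem stmt11 :
    ∃ C : ℝ, 0 < C ∧ ∃ ε₀ : ℝ, 0 < ε₀ ∧
      ∀ (G : Type) [Fintype G] [DecidableEq G] [MeasurableSpace G]
        [MeasurableSingletonClass G]
        (P : Matrix G G ℝ) (pi : G → ℝ) (μ : G → Measure (ℕ → G)),
        IsStochastic P → IsIrreducible P → IsAperiodic P →
        IsReversible P pi → IsMarkovChain P μ →
        ∀ ε : ℝ, 0 < ε → ε ≤ ε₀ →
        ∀ (A S : Set G), A ⊆ S → S.Nonempty → piOf pi A ≤ ε * piOf pi S →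
          ∑ x, A.indicator (harmStat pi μ S) x ≤
            C * ε * Real.log (1 / ε) / (1 - lam P pi) := by
  refine ⟨6, by norm_num, Real.exp (-1), Real.exp_pos _, ?_⟩
  intro G _ _ _ _ P pi μ hP hI hA hR hM ε hε0 hε1 A S _ hS hAS
  exact stmt11_general hP hR hM (poincareInequality_one_sub_lam hP hR)
    (sub_pos.2 (lam_lt_one hP hI hA hR)) (sub_le_self 1 (lam_nonneg P pi)) hε0 hε1 hS hAS

end HM
end

section
/- There exists a constant C > 0 (depending only on the dimension d ≥ 3) such that for all sufficiently small ε > 0 and all sufficiently large n the following holds: for the lazy simple random walk on the torus G = (ℤ/nℤ)^d, if A ⊆ S ⊆ G are sets with S nonempty and |A| ≤ (ε/(n² log n))·|S|, then the harmonic measure from the uniform distribution satisfies h_S(A) ≤ C·ε. -/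
open MeasureTheory Finset
open scoped ENNReal

namespace HM

variable {G : Type*} [Fintype G] [DecidableEq G]

variable [MeasurableSpace G]

/-- Adjacency on the discrete torus `(ℤ/nℤ)^d`: two points are adjacent iff they
differ by `±1` in exactly one coordinate. -/
def torusAdj {d n : ℕ} (x y : Fin d → ZMod n) : Prop :=
  x ≠ y ∧ ∃ i : Fin d, (∀ j : Fin d, j ≠ i → x j = y j) ∧
    (y i = x i + 1 ∨ y i = x i - 1)

open Classical in
/-- The transition matrix of the lazy simple random walk on the torus `(ℤ/nℤ)^d`:
`P(x,x) = 1/2` and `P(x,y) = 1/(4d)` for `y` adjacent to `x`. -/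
noncomputable def lazyTorus (d n : ℕ) [NeZero n] :
    Matrix (Fin d → ZMod n) (Fin d → ZMod n) ℝ :=
  Matrix.of fun x y => if y = x then 1 / 2 else if torusAdj x y then 1 / (4 * d) else 0


/-!
Reversing time turns the event `{T_S = t, X_t = x}` started from `π` into the event that the walk
started at `x` avoids `S` during the times `1, …, t`. Summing over `t` gives
`h_S(x) ≤ π(x) E_x[T_S⁺]`. Once `T` exceeds the `L²` mixing time, the walk is in `S` at time `T`
with probability at least `π(S) / 2` from every starting point, so `E_x[T_S⁺] ≤ 2T / π(S)` and
`h_S(A) ≤ 2T π(A) / π(S)`. On the torus, averaging the differences `f(· + z) - f` over all `z` gives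
a Poincaré inequality with spectral gap of order `n⁻²`, hence `T` of order `n² log n` suffices.
-/

open Matrix

section Matrices

variable {V : Type*} [Fintype V] {A B : Matrix V V ℝ}

lemma mulVec_le_mulVec_left (hAB : ∀ x y, A x y ≤ B x y) {f : V → ℝ} (hf : 0 ≤ f) :
    A *ᵥ f ≤ B *ᵥ f :=
  fun x ↦ dotProduct_le_dotProduct_of_nonneg_right (hAB x) hf

lemma mulVec_le_mulVec_right (hA : ∀ x y, 0 ≤ A x y) {f g : V → ℝ} (hfg : f ≤ g) :
    A *ᵥ f ≤ A *ᵥ g :=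
  fun x ↦ dotProduct_le_dotProduct_of_nonneg_left hfg (hA x)

lemma pow_apply_le_pow_apply [DecidableEq V] (hA : ∀ x y, 0 ≤ A x y)
    (hAB : ∀ x y, A x y ≤ B x y) (t : ℕ) (x y : V) : (A ^ t) x y ≤ (B ^ t) x y := by
  induction t generalizing y with
  | zero => simp
  | succ t ih =>
    simp only [pow_succ, mul_apply]
    gcongr with z
    · exact hA z y
    · exact pow_apply_nonneg (fun x y ↦ (hA x y).trans (hAB x y)) t x z
    · exact ih z
    · exact hAB z y

end Matrices

section Stochastic

variable {V : Type*} [Fintype V] {P : Matrix V V ℝ} {pi : V → ℝ}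

lemma IsStochastic.pow_mulVec_one [DecidableEq V] (hP : IsStochastic P) (t : ℕ) :
    P ^ t *ᵥ 1 = 1 :=
  (mem_rowStochastic.1 (pow_mem (mem_rowStochastic_iff_sum.2 hP) t)).2

lemma IsReversible.vecMul_eq (hrev : IsReversible P pi) (hP : IsStochastic P) :
    pi ᵥ* P = pi := by
  ext y
  simp only [vecMul, dotProduct, hrev.2.2 _ y, ← mul_sum, hP.2, mul_one]

lemma isReversible_const_of_symm [Nonempty V] (hP : ∀ x y, P x y = P y x) :
    IsReversible P fun _ ↦ (Fintype.card V : ℝ)⁻¹ :=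
  ⟨fun _ ↦ by positivity, by simp, fun x y ↦ by rw [hP]⟩

lemma piOf_const (c : ℝ) (S : Set V) : piOf (fun _ ↦ c) S = S.ncard * c := by
  classical
  rw [piOf, sum_indicator_eq_sum_filter, sum_const, nsmul_eq_mul, Set.ncard_eq_toFinset_card']
  simp

lemma piOf_eq_dotProduct (pi : V → ℝ) (S : Set V) : piOf pi S = pi ⬝ᵥ S.indicator 1 := by
  classical
  simp [piOf, dotProduct, Set.indicator_apply]

lemma pimin_pos {V : Type*} [Finite V] [Nonempty V] {pi : V → ℝ} (hpi : ∀ x, 0 < pi x) :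
    0 < pimin pi := by
  obtain ⟨x, hx⟩ := exists_eq_ciInf_of_finite (f := pi)
  exact (hpi x).trans_eq hx

lemma pimin_le {V : Type*} [Finite V] (pi : V → ℝ) (x : V) : pimin pi ≤ pi x :=
  ciInf_le (Set.finite_range pi).bddBelow x

lemma pimin_le_piOf (hpi : 0 ≤ pi) {S : Set V} (hS : S.Nonempty) :
    pimin pi ≤ piOf pi S := by
  obtain ⟨x, hx⟩ := hS
  calc pimin pi ≤ S.indicator pi x := by simpa only [Set.indicator_of_mem hx] using pimin_le pi x
    _ ≤ piOf pi S := single_le_sum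
        (fun y _ ↦ Set.indicator_nonneg (fun z _ ↦ hpi z) y) (mem_univ x)

end Stochastic

section Survival

variable {V : Type*} [Fintype V] [DecidableEq V] {P : Matrix V V ℝ} {pi : V → ℝ} {S : Set V}

/-- Multiplication by the indicator of the complement of `S`, which encodes the walk avoiding `S`:
`((offSet S * P) ^ t) y x = Pr_y[T_S ≥ t, X_t = x]`, while
`((P * offSet S) ^ t) x y = Pr_x[T_S⁺ > t, X_t = y]`. -/
noncomputable def offSet (S : Set V) : Matrix V V ℝ :=
  diagonal (Sᶜ.indicator 1)

lemma offSet_mul_nonneg (hP : ∀ x y, 0 ≤ P x y) (x y : V) : 0 ≤ (offSet S * P) x y := by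
  rw [offSet, diagonal_mul]
  exact mul_nonneg (Set.indicator_nonneg (fun _ _ ↦ zero_le_one) x) (hP x y)

lemma mul_offSet_nonneg (hP : ∀ x y, 0 ≤ P x y) (x y : V) : 0 ≤ (P * offSet S) x y := by
  rw [offSet, mul_diagonal]
  exact mul_nonneg (hP x y) (Set.indicator_nonneg (fun _ _ ↦ zero_le_one) y)

lemma mul_offSet_le (hP : ∀ x y, 0 ≤ P x y) (x y : V) : (P * offSet S) x y ≤ P x y := by
  rw [offSet, mul_diagonal]
  exact mul_le_of_le_one_right (hP x y)
    (Set.indicator_le_self' (fun _ _ ↦ zero_le_one) y)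

lemma offSet_mul_pow_succ_apply {x : V} (hx : x ∉ S) (t : ℕ) (y : V) :
    ((offSet S * P) ^ (t + 1)) x y = ∑ z, P x z * ((offSet S * P) ^ t) z y := by
  have hrow (z : V) : (offSet S * P) x z = P x z := by simp [offSet, diagonal_mul, hx]
  rw [pow_succ', Matrix.mul_apply]
  exact sum_congr rfl fun z _ ↦ by rw [hrow]

lemma offSet_mulVec_one (S : Set V) : offSet S *ᵥ 1 = Sᶜ.indicator 1 := by
  ext x
  simp [offSet, mulVec_diagonal]

lemma IsReversible.mul_offSet_mul_pow (hrev : IsReversible P pi) (S : Set V) (t : ℕ) (x y : V) :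
    pi y * ((offSet S * P) ^ t) y x = pi x * ((P * offSet S) ^ t) x y := by
  have hPi : SemiconjBy (diagonal pi) P Pᵀ := by
    ext a b
    simpa [diagonal_mul, mul_diagonal, mul_comm] using hrev.2.2 a b
  have hcomm : SemiconjBy (diagonal pi) (offSet S) (offSet S) := commute_diagonal _ _
  have htranspose : offSet S * Pᵀ = (P * offSet S)ᵀ := by
    rw [transpose_mul, offSet, diagonal_transpose]
  have h := congrFun₂ ((hcomm.mul_right hPi).pow_right t) y x
  rwa [htranspose, ← transpose_pow, diagonal_mul, mul_diagonal, transpose_apply,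
    mul_comm _ (pi x)] at h

/-- The survival function `survival P S t x = Pr_x[T_S⁺ > t]` of the return time to `S`. -/
noncomputable def survival (P : Matrix V V ℝ) (S : Set V) (t : ℕ) : V → ℝ :=
  (P * offSet S) ^ t *ᵥ 1

lemma survival_eq_sum (P : Matrix V V ℝ) (S : Set V) (t : ℕ) (x : V) :
    survival P S t x = ∑ y, ((P * offSet S) ^ t) x y := by
  simp [survival, mulVec, dotProduct]

lemma survival_nonneg (hP : ∀ x y, 0 ≤ P x y) (t : ℕ) : 0 ≤ survival P S t := fun x ↦ by
  rw [survival_eq_sum]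
  exact sum_nonneg fun y _ ↦ pow_apply_nonneg (mul_offSet_nonneg hP) t x y

lemma IsStochastic.survival_le_one (hP : IsStochastic P) (t : ℕ) : survival P S t ≤ 1 :=
  calc survival P S t
      ≤ P ^ t *ᵥ 1 := mulVec_le_mulVec_left
        (pow_apply_le_pow_apply (mul_offSet_nonneg hP.1) (mul_offSet_le hP.1) t) zero_le_one
    _ = 1 := hP.pow_mulVec_one t

lemma IsStochastic.survival_le_one_sub (hP : IsStochastic P) {t : ℕ} (ht : t ≠ 0) :
    survival P S t ≤ 1 - P ^ t *ᵥ S.indicator 1 := by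
  obtain ⟨k, rfl⟩ := Nat.exists_eq_succ_of_ne_zero ht
  have hnonneg : 0 ≤ P *ᵥ Sᶜ.indicator 1 :=
    fun x ↦ dotProduct_nonneg_of_nonneg (hP.1 x) (Set.indicator_nonneg fun _ _ ↦ zero_le_one)
  calc survival P S (k + 1)
      = (P * offSet S) ^ k *ᵥ (P *ᵥ Sᶜ.indicator 1) := by
        rw [survival, pow_succ, ← mulVec_mulVec, ← mulVec_mulVec, offSet_mulVec_one]
    _ ≤ P ^ k *ᵥ (P *ᵥ Sᶜ.indicator 1) := mulVec_le_mulVec_left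
        (pow_apply_le_pow_apply (mul_offSet_nonneg hP.1) (mul_offSet_le hP.1) k) hnonneg
    _ = 1 - P ^ (k + 1) *ᵥ S.indicator 1 := by
        rw [mulVec_mulVec, ← pow_succ, Set.indicator_compl, mulVec_sub, hP.pow_mulVec_one]

lemma survival_add_le (hP : ∀ x y, 0 ≤ P x y) {T : ℕ} {c : ℝ} (hT : ∀ x, survival P S T x ≤ c)
    (t : ℕ) (x : V) : survival P S (T + t) x ≤ c * survival P S t x :=
  calc survival P S (T + t) x
      = ((P * offSet S) ^ t *ᵥ survival P S T) x := by
        rw [survival, survival, add_comm, pow_add, mulVec_mulVec]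
    _ ≤ ((P * offSet S) ^ t *ᵥ (c • (1 : V → ℝ))) x :=
        mulVec_le_mulVec_right (pow_apply_nonneg (mul_offSet_nonneg hP) t)
          (fun y ↦ by simpa using hT y) x
    _ = c * survival P S t x := by rw [mulVec_smul]; rfl

lemma sum_range_le_div_of_add_le {c : ℕ → ℝ} {T : ℕ} {δ : ℝ} (hδ : 0 < δ) (hc₀ : ∀ t, 0 ≤ c t)
    (hc₁ : ∀ t, c t ≤ 1) (hc : ∀ t, c (T + t) ≤ (1 - δ) * c t) (M : ℕ) :
    ∑ t ∈ range M, c t ≤ T / δ := by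
  have hsplit : ∑ t ∈ range M, c t ≤ ∑ t ∈ range T, c t + ∑ t ∈ range M, c (T + t) := by
    rw [← sum_range_add]
    exact sum_le_sum_of_subset_of_nonneg (range_subset_range.2 (by lia)) fun t _ _ ↦ hc₀ t
  have hhead : ∑ t ∈ range T, c t ≤ T := by
    simpa using sum_le_sum fun t (_ : t ∈ range T) ↦ hc₁ t
  have htail : ∑ t ∈ range M, c (T + t) ≤ (1 - δ) * ∑ t ∈ range M, c t := by
    rw [mul_sum]
    exact sum_le_sum fun t _ ↦ hc t
  rw [le_div_iff₀ hδ]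
  linarith

lemma IsStochastic.sum_survival_le (hP : IsStochastic P) {T : ℕ} (hT : T ≠ 0) {δ : ℝ} (hδ : 0 < δ)
    (hhit : ∀ x, δ ≤ (P ^ T *ᵥ S.indicator 1) x) (M : ℕ) (x : V) :
    ∑ t ∈ range M, survival P S t x ≤ T / δ :=
  sum_range_le_div_of_add_le hδ (fun t ↦ survival_nonneg hP.1 t x)
    (fun t ↦ hP.survival_le_one t x)
    (fun t ↦ survival_add_le hP.1
      (fun z ↦ (hP.survival_le_one_sub hT z).trans (sub_le_sub_left (hhit z) 1)) t x) M

end Survival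

section HarmonicMeasure

variable {V : Type*} [Fintype V] [DecidableEq V] [MeasurableSpace V] {P : Matrix V V ℝ}
  {pi : V → ℝ} {μ : V → Measure (ℕ → V)} {S : Set V}

lemma IsMarkovChain.measure_cylinder_succ {V : Type*} [DecidableEq V] [MeasurableSpace V]
    {P : Matrix V V ℝ} {μ : V → Measure (ℕ → V)} (hP : ∀ x y, 0 ≤ P x y) (hμ : IsMarkovChain P μ)
    (y : V) (s : ℕ) (w : ℕ → V) (v : V) :
    μ y {ω | ∀ i ≤ s + 1, ω i = Function.update w (s + 1) v i} =
      μ y {ω | ∀ i ≤ s, ω i = w i} * ENNReal.ofReal (P (w s) v) := by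
  have hw : ∀ i ≤ s, Function.update w (s + 1) v i = w i :=
    fun i hi ↦ Function.update_of_ne (by lia) _ _
  have hprod : ∏ i ∈ range s, P (Function.update w (s + 1) v i)
      (Function.update w (s + 1) v (i + 1)) = ∏ i ∈ range s, P (w i) (w (i + 1)) :=
    prod_congr rfl fun i hi ↦ by
      rw [mem_range] at hi
      rw [hw i hi.le, hw (i + 1) hi]
  rw [hμ.2, hμ.2, prod_range_succ, hprod, hw 0 s.zero_le, hw s le_rfl, Function.update_self,
    ← mul_assoc, ENNReal.ofReal_mul (mul_nonneg (by positivity) (prod_nonneg fun _ _ ↦ hP _ _))]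

lemma IsMarkovChain.measure_cylinder_avoid_le (hP : ∀ x y, 0 ≤ P x y) (hμ : IsMarkovChain P μ)
    (S : Set V) (y x : V) (t s : ℕ) (w : ℕ → V) :
    μ y {ω | (∀ i ≤ s, ω i = w i) ∧ (∀ j < t, ω (s + j) ∉ S) ∧ ω (s + t) = x} ≤
      μ y {ω | ∀ i ≤ s, ω i = w i} * ENNReal.ofReal (((offSet S * P) ^ t) (w s) x) := by
  induction t generalizing s w with
  | zero =>
    obtain hx | hx := eq_or_ne (w s) x
    · simpa [hx] using measure_mono fun ω hω ↦ hω.1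
    · refine (measure_mono (t := ∅) ?_).trans (by simp)
      rintro ω ⟨hpre, -, hend⟩
      exact hx ((hpre s le_rfl).symm.trans hend)
  | succ t ih =>
    by_cases hS : w s ∈ S
    · refine (measure_mono (t := ∅) ?_).trans (by simp)
      rintro ω ⟨hpre, havoid, -⟩
      exact havoid 0 t.succ_pos (by rwa [add_zero, hpre s le_rfl])
    have hcover : {ω : ℕ → V | (∀ i ≤ s, ω i = w i) ∧ (∀ j < t + 1, ω (s + j) ∉ S) ∧
        ω (s + (t + 1)) = x} ⊆ ⋃ v, {ω | (∀ i ≤ s + 1, ω i = Function.update w (s + 1) v i) ∧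
          (∀ j < t, ω (s + 1 + j) ∉ S) ∧ ω (s + 1 + t) = x} := by
      rintro ω ⟨hpre, havoid, hend⟩
      refine Set.mem_iUnion.2 ⟨ω (s + 1), fun i hi ↦ ?_, fun j hj ↦ ?_, ?_⟩
      · obtain rfl | hi := hi.eq_or_lt
        · rw [Function.update_self]
        · rw [Function.update_of_ne hi.ne, hpre i (Nat.lt_succ_iff.1 hi)]
      · simpa only [add_assoc, add_comm 1] using havoid (j + 1) (by lia)
      · simpa only [add_assoc, add_comm 1] using hend
    refine (measure_mono hcover).trans ((measure_iUnion_fintype_le _ _).trans ?_)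
    calc _ ≤ ∑ v, μ y {ω | ∀ i ≤ s, ω i = w i} * (ENNReal.ofReal (P (w s) v) *
          ENNReal.ofReal (((offSet S * P) ^ t) v x)) := sum_le_sum fun v _ ↦ by
            simpa only [hμ.measure_cylinder_succ hP, Function.update_self, mul_assoc]
              using ih (s + 1) (Function.update w (s + 1) v)
      _ = μ y {ω | ∀ i ≤ s, ω i = w i} *
          ENNReal.ofReal (((offSet S * P) ^ (t + 1)) (w s) x) := by
        simp only [← mul_sum, ← ENNReal.ofReal_mul (hP _ _)]
        rw [offSet_mul_pow_succ_apply hS, ENNReal.ofReal_sum_of_nonneg fun v _ ↦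
          mul_nonneg (hP _ _) (pow_apply_nonneg (offSet_mul_nonneg hP) t v x)]

lemma IsMarkovChain.measure_avoid_le (hP : ∀ x y, 0 ≤ P x y) (hμ : IsMarkovChain P μ)
    (S : Set V) (y x : V) (t : ℕ) :
    μ y {ω | (∀ j < t, ω j ∉ S) ∧ ω t = x} ≤ ENNReal.ofReal (((offSet S * P) ^ t) y x) := by
  have hstart (v : V) : μ y {ω | ∀ i ≤ 0, ω i = v} = if v = y then 1 else 0 := by
    rw [hμ.2 y 0 fun _ ↦ v]
    split_ifs <;> simp
  have hcover : {ω : ℕ → V | (∀ j < t, ω j ∉ S) ∧ ω t = x} ⊆ ⋃ v,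
      {ω | (∀ i ≤ 0, ω i = v) ∧ (∀ j < t, ω (0 + j) ∉ S) ∧ ω (0 + t) = x} := by
    rintro ω ⟨havoid, hend⟩
    exact Set.mem_iUnion.2 ⟨ω 0, by simp, by simpa using havoid, by simpa using hend⟩
  calc μ y {ω | (∀ j < t, ω j ∉ S) ∧ ω t = x}
      ≤ ∑ v, μ y {ω | (∀ i ≤ 0, ω i = v) ∧ (∀ j < t, ω (0 + j) ∉ S) ∧ ω (0 + t) = x} :=
        (measure_mono hcover).trans (measure_iUnion_fintype_le _ _)
    _ ≤ ∑ v, (if v = y then 1 else 0) * ENNReal.ofReal (((offSet S * P) ^ t) v x) :=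
        sum_le_sum fun v _ ↦ by
          simpa only [hstart] using hμ.measure_cylinder_avoid_le hP S y x t 0 fun _ ↦ v
    _ = ENNReal.ofReal (((offSet S * P) ^ t) y x) := by simp

lemma hitsAt_subset_s13 {V : Type*} (S : Set V) (x : V) :
    hitsAt S x ⊆ ⋃ t : ℕ, {ω | (∀ j < t, ω j ∉ S) ∧ ω t = x} := by
  rintro ω ⟨t, ht, hx⟩
  refine Set.mem_iUnion.2 ⟨t, fun j hj hjS ↦ hj.not_ge ?_, hx⟩
  have hle : hit S ω ≤ j := sInf_le ⟨j, hjS, rfl⟩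
  rwa [ht, Nat.cast_le] at hle

lemma IsMarkovChain.measure_hitsAt_le (hP : ∀ x y, 0 ≤ P x y) (hμ : IsMarkovChain P μ)
    (S : Set V) (y x : V) :
    μ y (hitsAt S x) ≤ ∑' t : ℕ, ENNReal.ofReal (((offSet S * P) ^ t) y x) :=
  (measure_mono (hitsAt_subset_s13 S x)).trans <| (measure_iUnion_le _).trans <|
    ENNReal.tsum_le_tsum fun t ↦ hμ.measure_avoid_le hP S y x t

lemma harm_nonneg {V : Type*} [MeasurableSpace V] (μ : V → Measure (ℕ → V)) (S : Set V)
    (y x : V) : 0 ≤ harm μ S y x :=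
  ENNReal.toReal_nonneg

lemma IsMarkovChain.harmStat_le_s13 (hP : ∀ x y, 0 ≤ P x y) (hμ : IsMarkovChain P μ)
    (hrev : IsReversible P pi) {x : V} {B : ℝ}
    (hB : ∀ M, ∑ t ∈ range M, survival P S t x ≤ B) : harmStat pi μ S x ≤ pi x * B := by
  have hprob := hμ.1
  have hx := (hrev.1 x).le
  have hterm (y : V) (t : ℕ) : 0 ≤ pi x * ((P * offSet S) ^ t) x y :=
    mul_nonneg hx (pow_apply_nonneg (mul_offSet_nonneg hP) t x y)
  have hstart (y : V) : ENNReal.ofReal (pi y * harm μ S y x) ≤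
      ∑' t : ℕ, ENNReal.ofReal (pi x * ((P * offSet S) ^ t) x y) := by
    simp only [← hrev.mul_offSet_mul_pow, ENNReal.ofReal_mul (hrev.1 y).le, ENNReal.tsum_mul_left,
      harm, ENNReal.ofReal_toReal (measure_ne_top (μ y) _)]
    gcongr
    exact hμ.measure_hitsAt_le hP S y x
  have hB₀ : 0 ≤ B := by simpa using hB 0
  rw [← ENNReal.ofReal_le_ofReal_iff (mul_nonneg hx hB₀), harmStat,
    ENNReal.ofReal_sum_of_nonneg fun y _ ↦ mul_nonneg (hrev.1 y).le (harm_nonneg μ S y x)]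
  refine (sum_le_sum fun y _ ↦ hstart y).trans ?_
  rw [← Summable.tsum_finsetSum fun _ _ ↦ ENNReal.summable]
  refine ENNReal.tsum_le_of_sum_range_le fun M ↦ ?_
  simp only [← ENNReal.ofReal_sum_of_nonneg fun y _ ↦ hterm y _, ← mul_sum, ← survival_eq_sum]
  rw [← ENNReal.ofReal_sum_of_nonneg fun t _ ↦ mul_nonneg hx (survival_nonneg hP t x), ← mul_sum]
  gcongr
  exact hB M

end HarmonicMeasure

section L2Contraction

variable {V : Type*} [Fintype V] {P : Matrix V V ℝ} {pi : V → ℝ} {q : ℝ}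

/-- `P` contracts the variance by the factor `q` in `L²(π)`. For a reversible chain, `q` may be
taken to be `λ²`, where `λ` is the largest absolute value of a nontrivial eigenvalue. -/
def HasL2Contraction (P : Matrix V V ℝ) (pi : V → ℝ) (q : ℝ) : Prop :=
  ∀ f : V → ℝ, pi ⬝ᵥ f = 0 → pi ⬝ᵥ (P *ᵥ f) ^ 2 ≤ q * (pi ⬝ᵥ f ^ 2)

lemma HasL2Contraction.mul_sq_sub_le (hc : HasL2Contraction P pi q) (hq : 0 ≤ q)
    (hone : P *ᵥ 1 = 1) (hpi : 0 ≤ pi) (hsum : pi ⬝ᵥ 1 = 1) (f : V → ℝ) (x : V) :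
    pi x * ((P *ᵥ f) x - pi ⬝ᵥ f) ^ 2 ≤ q * (pi ⬝ᵥ f ^ 2) := by
  set m := pi ⬝ᵥ f
  set g := f - m • (1 : V → ℝ)
  have hg : pi ⬝ᵥ g = 0 := by simp [g, dotProduct_sub, hsum, m]
  have hPg : (P *ᵥ g) x = (P *ᵥ f) x - m := by simp [g, mulVec_sub, mulVec_smul, hone]
  have hvar : pi ⬝ᵥ g ^ 2 = pi ⬝ᵥ f ^ 2 - m ^ 2 := by
    have hsq : g ^ 2 = f ^ 2 - (2 * m) • f + m ^ 2 • (1 : V → ℝ) := by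
      ext y
      simp only [g, Pi.pow_apply, Pi.sub_apply, Pi.add_apply, Pi.smul_apply, Pi.one_apply,
        smul_eq_mul, mul_one]
      ring
    rw [hsq, dotProduct_add, dotProduct_sub, dotProduct_smul, dotProduct_smul, hsum]
    simp only [smul_eq_mul, m]
    ring
  calc pi x * ((P *ᵥ f) x - m) ^ 2
      = pi x * ((P *ᵥ g) ^ 2) x := by rw [← hPg]; rfl
    _ ≤ pi ⬝ᵥ (P *ᵥ g) ^ 2 := single_le_sum (f := fun y ↦ pi y * ((P *ᵥ g) ^ 2) y)
        (fun y _ ↦ mul_nonneg (hpi y) (sq_nonneg _)) (mem_univ x)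
    _ ≤ q * (pi ⬝ᵥ g ^ 2) := hc g hg
    _ ≤ q * (pi ⬝ᵥ f ^ 2) := by
      rw [hvar]
      gcongr
      exact sub_le_self _ (sq_nonneg m)

lemma HasL2Contraction.half_piOf_le (hc : HasL2Contraction P pi q) (hq : 0 ≤ q)
    (hqmin : q ≤ (pimin pi / 2) ^ 2) (hone : P *ᵥ 1 = 1) (hpi : ∀ x, 0 < pi x)
    (hsum : pi ⬝ᵥ 1 = 1) {S : Set V} (hS : S.Nonempty) (x : V) :
    piOf pi S / 2 ≤ (P *ᵥ S.indicator 1) x := by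
  have : Nonempty V := ⟨x⟩
  have hpi₀ : 0 ≤ pi := fun y ↦ (hpi y).le
  have hmin := pimin_pos hpi
  have hminS := pimin_le_piOf hpi₀ hS
  have hdev : pimin pi * ((P *ᵥ S.indicator 1) x - piOf pi S) ^ 2 ≤
      pimin pi * (piOf pi S / 2) ^ 2 :=
    calc pimin pi * ((P *ᵥ S.indicator 1) x - piOf pi S) ^ 2
        ≤ pi x * ((P *ᵥ S.indicator 1) x - pi ⬝ᵥ S.indicator 1) ^ 2 := by
          rw [piOf_eq_dotProduct]
          gcongr
          exact pimin_le pi x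
      _ ≤ q * (pi ⬝ᵥ S.indicator 1 ^ 2) := hc.mul_sq_sub_le hq hone hpi₀ hsum _ x
      _ = q * piOf pi S := by
          rw [piOf_eq_dotProduct, pow_two, ← Set.inter_indicator_one, Set.inter_self]
      _ ≤ (pimin pi / 2) ^ 2 * piOf pi S := by gcongr; exact hmin.le.trans hminS
      _ = pimin pi * (pimin pi * piOf pi S / 4) := by ring
      _ ≤ pimin pi * (piOf pi S * piOf pi S / 4) := by gcongr; exact hmin.le.trans hminS
      _ = pimin pi * (piOf pi S / 2) ^ 2 := by ring
  have hpiS : 0 ≤ piOf pi S / 2 := by linarith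
  have := (abs_le_of_sq_le_sq' (le_of_mul_le_mul_left hdev hmin) hpiS).1
  linarith

variable [DecidableEq V]

lemma HasL2Contraction.pow (hc : HasL2Contraction P pi q) (hq : 0 ≤ q) (hstat : pi ᵥ* P = pi)
    (t : ℕ) : HasL2Contraction (P ^ t) pi (q ^ t) := by
  induction t with
  | zero => simp [HasL2Contraction]
  | succ t ih =>
    intro f hf
    have hmean : pi ⬝ᵥ P *ᵥ f = 0 := by rwa [dotProduct_mulVec, hstat]
    calc pi ⬝ᵥ (P ^ (t + 1) *ᵥ f) ^ 2
        = pi ⬝ᵥ (P ^ t *ᵥ P *ᵥ f) ^ 2 := by rw [mulVec_mulVec, pow_succ P]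
      _ ≤ q ^ t * (pi ⬝ᵥ (P *ᵥ f) ^ 2) := ih _ hmean
      _ ≤ q ^ t * (q * (pi ⬝ᵥ f ^ 2)) := by gcongr; exact hc f hf
      _ = q ^ (t + 1) * (pi ⬝ᵥ f ^ 2) := by ring

variable [MeasurableSpace V] {μ : V → Measure (ℕ → V)}

lemma IsMarkovChain.sum_indicator_harmStat_le_s13 (hμ : IsMarkovChain P μ) (hP : IsStochastic P)
    (hrev : IsReversible P pi) (hc : HasL2Contraction P pi q) (hq : 0 ≤ q) {T : ℕ} (hT₀ : T ≠ 0)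
    (hT : q ^ T ≤ (pimin pi / 2) ^ 2) {S : Set V} (hS : S.Nonempty) (A : Set V) :
    ∑ x, A.indicator (harmStat pi μ S) x ≤ 2 * T * (piOf pi A / piOf pi S) := by
  have : Nonempty V := hS.nonempty
  have hpiS : 0 < piOf pi S :=
    (pimin_pos hrev.1).trans_le (pimin_le_piOf (fun x ↦ (hrev.1 x).le) hS)
  have hhit : ∀ x, piOf pi S / 2 ≤ (P ^ T *ᵥ S.indicator 1) x :=
    (hc.pow hq (hrev.vecMul_eq hP) T).half_piOf_le (pow_nonneg hq T) hT (hP.pow_mulVec_one T)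
      hrev.1 (by rw [dotProduct_one, hrev.2.1]) hS
  have hharm (x : V) : harmStat pi μ S x ≤ pi x * (T / (piOf pi S / 2)) :=
    hμ.harmStat_le_s13 hP.1 hrev fun M ↦ hP.sum_survival_le hT₀ (half_pos hpiS) hhit M x
  calc ∑ x, A.indicator (harmStat pi μ S) x
      ≤ ∑ x, A.indicator pi x * (T / (piOf pi S / 2)) := by
        gcongr with x
        rw [← Set.indicator_mul_const]
        exact Set.indicator_le_indicator (hharm x)
    _ = 2 * T * (piOf pi A / piOf pi S) := by
        rw [← sum_mul, ← piOf]
        field_simp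

end L2Contraction

section Translation

variable {Γ : Type*} [AddCommGroup Γ] [Fintype Γ]

/-- The `ℓ²` modulus of continuity `‖f(· + z) - f‖₂` of a function on a finite abelian group. -/
noncomputable def l2Modulus (f : Γ → ℝ) (z : Γ) : ℝ :=
  ‖WithLp.toLp 2 fun x ↦ f (x + z) - f x‖

lemma l2Modulus_nonneg (f : Γ → ℝ) (z : Γ) : 0 ≤ l2Modulus f z := norm_nonneg _

lemma l2Modulus_sq (f : Γ → ℝ) (z : Γ) : l2Modulus f z ^ 2 = ∑ x, (f (x + z) - f x) ^ 2 := by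
  simp [l2Modulus, EuclideanSpace.norm_sq_eq]

lemma l2Modulus_zero (f : Γ → ℝ) : l2Modulus f 0 = 0 := by
  simpa using l2Modulus_sq f 0

lemma l2Modulus_add_le (f : Γ → ℝ) (z w : Γ) :
    l2Modulus f (z + w) ≤ l2Modulus f z + l2Modulus f w := by
  have htranslate : ‖WithLp.toLp 2 fun x ↦ f (x + z + w) - f (x + z)‖ = l2Modulus f w := by
    rw [← sq_eq_sq₀ (norm_nonneg _) (l2Modulus_nonneg _ _), l2Modulus_sq,
      EuclideanSpace.real_norm_sq_eq]
    exact Equiv.sum_comp (Equiv.addRight z) fun x ↦ (f (x + w) - f x) ^ 2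
  calc l2Modulus f (z + w)
      = ‖WithLp.toLp 2 (fun x ↦ f (x + z) - f x) +
          WithLp.toLp 2 fun x ↦ f (x + z + w) - f (x + z)‖ := by
        rw [l2Modulus, ← WithLp.toLp_add]
        congr 2 with x
        simp [add_assoc]
    _ ≤ l2Modulus f z + l2Modulus f w := by
        rw [← htranslate]
        exact norm_add_le _ _

lemma l2Modulus_sum_le {ι : Type*} (f : Γ → ℝ) (s : Finset ι) (z : ι → Γ) :
    l2Modulus f (∑ i ∈ s, z i) ≤ ∑ i ∈ s, l2Modulus f (z i) :=
  le_sum_of_subadditive _ (l2Modulus_zero f).le (l2Modulus_add_le f) s z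

lemma l2Modulus_nsmul_le (f : Γ → ℝ) (k : ℕ) (z : Γ) :
    l2Modulus f (k • z) ≤ k * l2Modulus f z := by
  simpa using l2Modulus_sum_le f (range k) fun _ ↦ z

lemma two_mul_sum_sq_le_of_l2Modulus_sq_le {f : Γ → ℝ} {B : ℝ} (hf : ∑ x, f x = 0)
    (hB : ∀ z, l2Modulus f z ^ 2 ≤ B) : 2 * ∑ x, f x ^ 2 ≤ B := by
  have hrow (x : Γ) : ∑ z, (f (x + z) - f x) ^ 2 = ∑ y, f y ^ 2 + Fintype.card Γ * f x ^ 2 :=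
    calc ∑ z, (f (x + z) - f x) ^ 2
        = ∑ y, (f y - f x) ^ 2 := Equiv.sum_comp (Equiv.addLeft x) fun y ↦ (f y - f x) ^ 2
      _ = ∑ y, f y ^ 2 + Fintype.card Γ * f x ^ 2 := by
        simp [sub_sq, sum_add_distrib, ← sum_mul, ← mul_sum, hf]
  have hmean : ∑ z, l2Modulus f z ^ 2 = Fintype.card Γ * (2 * ∑ x, f x ^ 2) := by
    simp only [l2Modulus_sq]
    rw [sum_comm]
    simp only [hrow, sum_add_distrib, sum_const, card_univ, nsmul_eq_mul, ← mul_sum]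
    ring
  have hsum : ∑ z, l2Modulus f z ^ 2 ≤ Fintype.card Γ * B := by
    simpa using sum_le_sum fun z (_ : z ∈ univ) ↦ hB z
  exact le_of_mul_le_mul_left (hmean ▸ hsum) (by exact_mod_cast Fintype.card_pos)

lemma sum_sq_avg_le {ι : Type*} [Fintype ι] [Nonempty ι] (f : Γ → ℝ) (σ : ι → Γ) :
    ∑ x, ((∑ i, (f x + f (x + σ i)) / 2) / Fintype.card ι) ^ 2 ≤
      ∑ x, f x ^ 2 - (∑ i, l2Modulus f (σ i) ^ 2) / (4 * Fintype.card ι) := by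
  have hparallelogram (i : ι) : ∑ x, ((f x + f (x + σ i)) / 2) ^ 2 =
      ∑ x, f x ^ 2 - l2Modulus f (σ i) ^ 2 / 4 := by
    have htranslate : ∑ x, f (x + σ i) ^ 2 = ∑ x, f x ^ 2 :=
      Equiv.sum_comp (Equiv.addRight (σ i)) fun x ↦ f x ^ 2
    calc ∑ x, ((f x + f (x + σ i)) / 2) ^ 2
        = ∑ x, (f x ^ 2 / 2 + f (x + σ i) ^ 2 / 2 - (f (x + σ i) - f x) ^ 2 / 4) :=
          sum_congr rfl fun x _ ↦ by ring
      _ = ∑ x, f x ^ 2 - l2Modulus f (σ i) ^ 2 / 4 := by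
          rw [sum_sub_distrib, sum_add_distrib, ← sum_div, ← sum_div, ← sum_div, htranslate,
            l2Modulus_sq]
          ring
  calc ∑ x, ((∑ i, (f x + f (x + σ i)) / 2) / Fintype.card ι) ^ 2
      ≤ ∑ x, (∑ i, ((f x + f (x + σ i)) / 2) ^ 2) / (Fintype.card ι : ℝ) :=
        sum_le_sum fun x _ ↦ sum_div_card_sq_le_sum_sq_div_card
    _ = (∑ i, ∑ x, ((f x + f (x + σ i)) / 2) ^ 2) / Fintype.card ι := by rw [← sum_div, sum_comm]
    _ = ∑ x, f x ^ 2 - (∑ i, l2Modulus f (σ i) ^ 2) / (4 * Fintype.card ι) := by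
        simp only [hparallelogram, sum_sub_distrib, sum_const, card_univ, nsmul_eq_mul, ← sum_div]
        field_simp

end Translation

lemma one_sub_pow_le_of_neg_log_le {γ a : ℝ} {T : ℕ} (hγ : γ ≤ 1) (ha : 0 < a)
    (h : -Real.log a ≤ γ * T) : (1 - γ) ^ T ≤ a :=
  calc (1 - γ) ^ T ≤ Real.exp (-γ) ^ T :=
        pow_le_pow_left₀ (sub_nonneg.2 hγ) (Real.one_sub_le_exp_neg γ) T
    _ = Real.exp (-(γ * T)) := by rw [← Real.exp_nat_mul]; ring_nf
    _ ≤ a := by rw [← Real.le_log_iff_exp_le ha]; linarith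

lemma one_div_four_mul_sq_mul_sq_le_one {a b : ℝ} (ha : 1 ≤ a) (hb : 1 ≤ b) :
    1 / (4 * a ^ 2 * b ^ 2) ≤ 1 := by
  have h : 1 ≤ a ^ 2 * b ^ 2 := one_le_mul_of_one_le_of_one_le (one_le_pow₀ ha) (one_le_pow₀ hb)
  exact div_le_one_of_le₀ (by linarith) (by positivity)

lemma one_le_sq_mul_log {n : ℕ} (hn : 3 ≤ n) : 1 ≤ (n : ℝ) ^ 2 * Real.log n := by
  have hn' : (3 : ℝ) ≤ n := by exact_mod_cast hn
  have hlog : 1 ≤ Real.log n := by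
    rw [Real.le_log_iff_exp_le (by linarith)]
    exact Real.exp_one_lt_three.le.trans hn'
  exact one_le_mul_of_one_le_of_one_le (one_le_pow₀ (by linarith)) hlog

section Torus

variable {d n : ℕ}

/-- The `2d` unit steps `±eᵢ` of the simple random walk on the torus. -/
def torusStep (s : Fin d × ℤˣ) : Fin d → ZMod n :=
  Pi.single s.1 ((s.2 : ℤ) : ZMod n)

lemma intCast_units_ne_zero [Fact (2 < n)] (u : ℤˣ) : ((u : ℤ) : ZMod n) ≠ 0 := by
  have : Nontrivial (ZMod n) := ⟨-1, 1, ZMod.neg_one_ne_one⟩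
  obtain rfl | rfl := Int.units_eq_one_or u <;> simp

lemma intCast_units_injective [Fact (2 < n)] :
    Function.Injective fun u : ℤˣ ↦ ((u : ℤ) : ZMod n) := by
  have hne : (-1 : ZMod n) ≠ 1 := ZMod.neg_one_ne_one
  intro u v
  obtain rfl | rfl := Int.units_eq_one_or u <;> obtain rfl | rfl := Int.units_eq_one_or v <;>
    simp [hne, hne.symm]

lemma torusStep_ne_zero [Fact (2 < n)] (s : Fin d × ℤˣ) : (torusStep s : Fin d → ZMod n) ≠ 0 := by
  simpa [torusStep] using intCast_units_ne_zero s.2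

lemma torusStep_injective [Fact (2 < n)] :
    Function.Injective (torusStep : Fin d × ℤˣ → Fin d → ZMod n) := by
  rintro ⟨i, u⟩ ⟨j, v⟩ h
  obtain rfl : i = j := by
    by_contra hij
    exact intCast_units_ne_zero u (by simpa [torusStep, hij] using congrFun h i)
  obtain rfl : u = v := intCast_units_injective (Pi.single_injective i h)
  rfl

lemma torusAdj_iff_exists_torusStep [Fact (2 < n)] {x y : Fin d → ZMod n} :
    torusAdj x y ↔ ∃ s, y = x + torusStep s := by
  constructor
  · rintro ⟨-, i, hj, hi⟩
    have hy : y = x + Pi.single i (y i - x i) := by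
      ext j
      obtain rfl | hji := eq_or_ne j i
      · simp
      · simp [hji, hj j hji]
    obtain hi | hi := hi
    · exact ⟨(i, 1), by simpa [hi, torusStep] using hy⟩
    · exact ⟨(i, -1), by simpa [hi, torusStep] using hy⟩
  · rintro ⟨⟨i, u⟩, rfl⟩
    refine ⟨by simpa using torusStep_ne_zero (i, u), i, fun j hji ↦ by simp [torusStep, hji], ?_⟩
    obtain rfl | rfl := Int.units_eq_one_or u <;> simp [torusStep, sub_eq_add_neg]

lemma torusAdj_comm {x y : Fin d → ZMod n} : torusAdj x y ↔ torusAdj y x := by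
  simp only [torusAdj, ne_comm, eq_comm, eq_sub_iff_add_eq, or_comm]

variable [NeZero n]

lemma lazyTorus_comm (x y : Fin d → ZMod n) : lazyTorus d n x y = lazyTorus d n y x := by
  rw [lazyTorus, of_apply, of_apply]
  congr 1
  · exact propext eq_comm
  · congr 1
    exact propext torusAdj_comm

lemma lazyTorus_nonneg (x y : Fin d → ZMod n) : 0 ≤ lazyTorus d n x y := by
  rw [lazyTorus, of_apply]
  positivity

lemma lazyTorus_apply [Fact (2 < n)] (x y : Fin d → ZMod n) :
    lazyTorus d n x y = (if y = x then 1 / 2 else 0) +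
      ∑ s, if y = x + torusStep s then 1 / (4 * d : ℝ) else 0 := by
  rw [lazyTorus, of_apply]
  obtain rfl | hxy := eq_or_ne y x
  · simp [torusStep_ne_zero]
  by_cases hadj : torusAdj x y
  · obtain ⟨s, rfl⟩ := torusAdj_iff_exists_torusStep.1 hadj
    simp [hadj, torusStep_ne_zero, torusStep_injective.eq_iff]
  · have hs (s) : y ≠ x + torusStep s := fun h ↦ hadj (torusAdj_iff_exists_torusStep.2 ⟨s, h⟩)
    simp [hadj, hxy, hs]

lemma lazyTorus_mulVec [NeZero d] [Fact (2 < n)] (f : (Fin d → ZMod n) → ℝ)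
    (x : Fin d → ZMod n) :
    (lazyTorus d n *ᵥ f) x =
      (∑ s, (f x + f (x + torusStep s)) / 2) / Fintype.card (Fin d × ℤˣ) := by
  simp only [mulVec, dotProduct, lazyTorus_apply, add_mul, sum_add_distrib, sum_mul, ite_mul,
    zero_mul]
  rw [sum_comm]
  have hd : (d : ℝ) ≠ 0 := NeZero.ne _
  simp only [sum_ite_eq', mem_univ, if_true, ← mul_sum, ← sum_div, sum_add_distrib, sum_const,
    card_univ, Fintype.card_prod, Fintype.card_fin, Fintype.card_units_int, nsmul_eq_mul]
  push_cast
  field_simp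
  ring

lemma isStochastic_lazyTorus [NeZero d] [Fact (2 < n)] : IsStochastic (lazyTorus d n) := by
  refine ⟨lazyTorus_nonneg, fun x ↦ ?_⟩
  have hd : (d : ℝ) ≠ 0 := NeZero.ne _
  simpa [mulVec, dotProduct, hd] using lazyTorus_mulVec (n := n) (d := d) 1 x

lemma l2Modulus_sq_le_sum_torusStep (f : (Fin d → ZMod n) → ℝ) (z : Fin d → ZMod n) :
    l2Modulus f z ^ 2 ≤ d * n ^ 2 * ∑ s, l2Modulus f (torusStep s) ^ 2 := by
  have hz : z = ∑ i, (z i).val • torusStep (i, 1) := by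
    simpa [torusStep, ← Pi.single_smul] using (univ_sum_single z).symm
  have hsum : l2Modulus f z ≤ ∑ i, n * l2Modulus f (torusStep (i, 1)) :=
    calc l2Modulus f z
        ≤ ∑ i, l2Modulus f ((z i).val • torusStep (i, 1)) := by
          conv_lhs => rw [hz]
          exact l2Modulus_sum_le f univ _
      _ ≤ ∑ i, n * l2Modulus f (torusStep (i, 1)) := by
          gcongr with i
          refine (l2Modulus_nsmul_le f _ _).trans ?_
          gcongr
          · exact l2Modulus_nonneg _ _
          · exact (ZMod.val_lt (z i)).le
  calc l2Modulus f z ^ 2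
      ≤ (∑ i : Fin d, n * l2Modulus f (torusStep (i, 1))) ^ 2 :=
        pow_le_pow_left₀ (l2Modulus_nonneg f z) hsum 2
    _ ≤ d * ∑ i : Fin d, (n * l2Modulus f (torusStep (i, 1))) ^ 2 := by
        simpa using sq_sum_le_card_mul_sum_sq (s := univ)
          (f := fun i : Fin d ↦ n * l2Modulus f (torusStep (i, 1)))
    _ = d * n ^ 2 * ∑ i : Fin d, l2Modulus f (torusStep (i, 1)) ^ 2 := by
        simp only [mul_pow, ← mul_sum, mul_assoc]
    _ ≤ d * n ^ 2 * ∑ s, l2Modulus f (torusStep s) ^ 2 := by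
        rw [Fintype.sum_prod_type]
        gcongr with i
        exact single_le_sum (f := fun u ↦ l2Modulus f (torusStep (i, u)) ^ 2)
          (fun _ _ ↦ sq_nonneg _) (mem_univ 1)

lemma hasL2Contraction_lazyTorus [NeZero d] [Fact (2 < n)] :
    HasL2Contraction (lazyTorus d n) (fun _ ↦ (Fintype.card (Fin d → ZMod n) : ℝ)⁻¹)
      (1 - 1 / (4 * d ^ 2 * n ^ 2)) := by
  intro f hf
  have hcard : (Fintype.card (Fin d → ZMod n) : ℝ)⁻¹ ≠ 0 := by positivity
  replace hf : ∑ x, f x = 0 := by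
    rwa [dotProduct, ← mul_sum, mul_eq_zero_iff_left hcard] at hf
  have hpoincare : 2 * ∑ x, f x ^ 2 ≤ d * n ^ 2 * ∑ s, l2Modulus f (torusStep s) ^ 2 :=
    two_mul_sum_sq_le_of_l2Modulus_sq_le hf (l2Modulus_sq_le_sum_torusStep f)
  have havg := sum_sq_avg_le f (torusStep : Fin d × ℤˣ → _)
  simp only [← lazyTorus_mulVec] at havg
  have hd : (0 : ℝ) < d := Nat.cast_pos.2 (NeZero.pos d)
  have hn : (0 : ℝ) < n := Nat.cast_pos.2 (NeZero.pos n)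
  have hsum : ∑ x, (lazyTorus d n *ᵥ f) x ^ 2 ≤ (1 - 1 / (4 * d ^ 2 * n ^ 2)) * ∑ x, f x ^ 2 :=
    calc ∑ x, (lazyTorus d n *ᵥ f) x ^ 2
        ≤ ∑ x, f x ^ 2 - (∑ s, l2Modulus f (torusStep s) ^ 2) / (8 * d) := by
          refine havg.trans_eq ?_
          simp only [Fintype.card_prod, Fintype.card_fin, Fintype.card_units_int]
          push_cast
          ring
      _ = ∑ x, f x ^ 2 -
          (d * n ^ 2 * ∑ s, l2Modulus f (torusStep s) ^ 2) / (8 * d ^ 2 * n ^ 2) := by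
          field_simp
      _ ≤ ∑ x, f x ^ 2 - (2 * ∑ x, f x ^ 2) / (8 * d ^ 2 * n ^ 2) := by gcongr
      _ = (1 - 1 / (4 * d ^ 2 * n ^ 2)) * ∑ x, f x ^ 2 := by
          field_simp
          ring
  simp only [dotProduct, Pi.pow_apply, ← mul_sum, mul_left_comm _ _⁻¹]
  gcongr

lemma pow_le_pimin_lazyTorus [NeZero d] (hn : 3 ≤ n) {T : ℕ}
    (hT : 8 * d ^ 2 * (d + 1) * n ^ 2 * Real.log n ≤ T) :
    (1 - 1 / (4 * d ^ 2 * n ^ 2) : ℝ) ^ T ≤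
      (pimin (fun _ : Fin d → ZMod n ↦ (Fintype.card (Fin d → ZMod n) : ℝ)⁻¹) / 2) ^ 2 := by
  have hd : (1 : ℝ) ≤ d := Nat.one_le_cast.2 (NeZero.one_le)
  have hn' : (3 : ℝ) ≤ n := by exact_mod_cast hn
  have hpimin : pimin (fun _ : Fin d → ZMod n ↦ (Fintype.card (Fin d → ZMod n) : ℝ)⁻¹) =
      ((n : ℝ) ^ d)⁻¹ := by simp [pimin]
  have hlower : ((n : ℝ) ^ (2 * (d + 1)))⁻¹ ≤ (((n : ℝ) ^ d)⁻¹ / 2) ^ 2 :=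
    calc ((n : ℝ) ^ (2 * (d + 1)))⁻¹ = (((n : ℝ) ^ d)⁻¹ / n) ^ 2 := by field_simp; ring
      _ ≤ (((n : ℝ) ^ d)⁻¹ / 2) ^ 2 := by gcongr; linarith
  rw [hpimin]
  refine (one_sub_pow_le_of_neg_log_le ?_ (by positivity) ?_).trans hlower
  · exact one_div_four_mul_sq_mul_sq_le_one hd (by linarith)
  · rw [Real.log_inv, neg_neg, Real.log_pow, one_div, ← div_eq_inv_mul, le_div_iff₀ (by positivity)]
    refine le_trans (le_of_eq ?_) hT
    push_cast
    ring

lemma sum_indicator_harmStat_lazyTorus_le [NeZero d] (hn : 3 ≤ n)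
    [MeasurableSpace (Fin d → ZMod n)] {μ : (Fin d → ZMod n) → Measure (ℕ → Fin d → ZMod n)}
    (hμ : IsMarkovChain (lazyTorus d n) μ) {T : ℕ} (hT₀ : T ≠ 0)
    (hT : 8 * d ^ 2 * (d + 1) * n ^ 2 * Real.log n ≤ T) {S : Set (Fin d → ZMod n)}
    (hS : S.Nonempty) (A : Set (Fin d → ZMod n)) :
    ∑ x, A.indicator (harmStat (fun _ ↦ (Fintype.card (Fin d → ZMod n) : ℝ)⁻¹) μ S) x ≤
      2 * T * (A.ncard / S.ncard) := by
  have : Fact (2 < n) := ⟨hn⟩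
  have hd : (1 : ℝ) ≤ d := Nat.one_le_cast.2 (NeZero.one_le)
  have hn' : (3 : ℝ) ≤ n := by exact_mod_cast hn
  have hgap : (0 : ℝ) ≤ 1 - 1 / (4 * d ^ 2 * n ^ 2) :=
    sub_nonneg.2 (one_div_four_mul_sq_mul_sq_le_one hd (by linarith))
  have hcard : (Fintype.card (Fin d → ZMod n) : ℝ)⁻¹ ≠ 0 := by positivity
  have h := hμ.sum_indicator_harmStat_le_s13 isStochastic_lazyTorus
    (isReversible_const_of_symm lazyTorus_comm) hasL2Contraction_lazyTorus hgap hT₀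
    (pow_le_pimin_lazyTorus hn hT) hS A
  rwa [piOf_const, piOf_const, mul_div_mul_right _ _ hcard] at h

end Torus

theorem stmt13_general (d : ℕ) [NeZero d] :
    ∃ C : ℝ, 0 < C ∧ ∀ (n : ℕ) [NeZero n], 3 ≤ n → ∀ [MeasurableSpace (Fin d → ZMod n)]
      (μ : (Fin d → ZMod n) → Measure (ℕ → Fin d → ZMod n)), IsMarkovChain (lazyTorus d n) μ →
      ∀ (A S : Set (Fin d → ZMod n)), S.Nonempty → ∀ ε : ℝ,
        (A.ncard : ℝ) ≤ ε / ((n : ℝ) ^ 2 * Real.log n) * (S.ncard : ℝ) →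
        ∑ x, A.indicator (harmStat (fun _ ↦ (Fintype.card (Fin d → ZMod n) : ℝ)⁻¹) μ S) x ≤
          C * ε := by
  set K : ℝ := 8 * d ^ 2 * (d + 1)
  have hd : (0 : ℝ) < d := Nat.cast_pos.2 (NeZero.pos d)
  have hK : 0 < K := by positivity
  refine ⟨2 * (K + 1), by positivity, fun n _ hn _ μ hμ A S hS ε hA ↦ ?_⟩
  set L : ℝ := n ^ 2 * Real.log n
  have hL : 1 ≤ L := one_le_sq_mul_log hn
  have hScard : (0 : ℝ) < S.ncard := by exact_mod_cast hS.ncard_pos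
  have hratio : (A.ncard : ℝ) / S.ncard ≤ ε / L := (div_le_iff₀ hScard).2 hA
  have hT : (⌈K * L⌉₊ : ℝ) ≤ (K + 1) * L := by
    linarith [Nat.ceil_lt_add_one (a := K * L) (by positivity)]
  calc ∑ x, A.indicator (harmStat (fun _ ↦ (Fintype.card (Fin d → ZMod n) : ℝ)⁻¹) μ S) x
      ≤ 2 * ⌈K * L⌉₊ * (A.ncard / S.ncard) :=
        sum_indicator_harmStat_lazyTorus_le hn hμ (Nat.ceil_pos.2 (by positivity)).ne'
          ((mul_assoc _ _ _).trans_le (Nat.le_ceil _)) hS A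
    _ ≤ 2 * ((K + 1) * L) * (ε / L) := by gcongr
    _ = 2 * (K + 1) * ε := by field_simp

/-- There is `C > 0` (depending only on `d ≥ 3`) such that for all small enough
`ε > 0` and all large enough `n`: for the lazy simple random walk on `(ℤ/nℤ)^d`,
if `A ⊆ S` with `S` nonempty and `|A| ≤ (ε/(n² log n))·|S|`, then `h_S(A) ≤ C·ε`. -/
theorem stmt13 (d : ℕ) (hd : 3 ≤ d) :
    ∃ C : ℝ, 0 < C ∧ ∃ ε₀ : ℝ, 0 < ε₀ ∧
      ∀ ε : ℝ, 0 < ε → ε ≤ ε₀ →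
      ∃ n₀ : ℕ, ∀ (n : ℕ) [NeZero n], n₀ ≤ n →
        ∀ [MeasurableSpace (Fin d → ZMod n)]
          [MeasurableSingletonClass (Fin d → ZMod n)]
          (μ : (Fin d → ZMod n) → Measure (ℕ → Fin d → ZMod n)),
          IsMarkovChain (lazyTorus d n) μ →
          ∀ (A S : Set (Fin d → ZMod n)), A ⊆ S → S.Nonempty →
            (A.ncard : ℝ) ≤ ε / ((n : ℝ) ^ 2 * Real.log n) * (S.ncard : ℝ) →
            ∑ x, A.indicator
                (harmStat (fun _ => ((Fintype.card (Fin d → ZMod n) : ℝ))⁻¹) μ S) x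
              ≤ C * ε := by
  have : NeZero d := ⟨by lia⟩
  obtain ⟨C, hC, h⟩ := stmt13_general d
  exact ⟨C, hC, 1, one_pos, fun ε _ _ ↦
    ⟨3, fun n _ hn _ _ μ hμ A S _ hS hA ↦ h n hn μ hμ A S hS ε hA⟩⟩

end HM
end
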